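/- arXiv:2104.07729 — 2 statements merged into one kernel-verified Lean document; each statement's English description precedes it below -/
import Mathlib

section
/- Let k ≥ 2 be an integer and let p be a fixed positive integer. For all sufficiently large n (depending on k and p), if G is an n-vertex W_{2k+1}-free simple graph attaining the maximum spectral radius among all n-vertex W_{2k+1}-free graphs, then the set P = { v ∈ V(G) : d(v) ≤ (1/2 − 1/p)n } satisfies |P| ≤ 16 p k n^{1/k}. -/
/-- The wheel graph on `t` vertices: vertex `0` joined to every vertex of the
cycle `1, 2, …, t-1` (with `t-1` adjacent to `1`). -/
def wheelGraph (t : ℕ) : SimpleGraph (Fin t) where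
  Adj a b := a ≠ b ∧ (a.val = 0 ∨ b.val = 0 ∨ a.val + 1 = b.val ∨ b.val + 1 = a.val ∨
      (a.val = 1 ∧ b.val = t - 1) ∨ (b.val = 1 ∧ a.val = t - 1))
  symm := by
    constructor
    intro a b h
    exact ⟨h.1.symm, by tauto⟩
  loopless := by
    constructor
    intro a h
    exact h.1 rfl

/-- `G` contains a copy of `F`, i.e. a subgraph isomorphic to `F`. -/
def ContainsCopy {α β : Type*} (F : SimpleGraph α) (G : SimpleGraph β) : Prop :=
  ∃ f : α ↪ β, ∀ a b, F.Adj a b → G.Adj (f a) (f b)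

/-- `G` is `W_t`-free: it contains no subgraph isomorphic to the wheel on `t` vertices. -/
def WheelFree (t : ℕ) {n : ℕ} (G : SimpleGraph (Fin n)) : Prop :=
  ¬ ContainsCopy (wheelGraph t) G

/-- The spectral radius of `G`: the largest eigenvalue of its adjacency matrix. -/
noncomputable def lam1 {n : ℕ} (G : SimpleGraph (Fin n)) : ℝ := by
  classical
  exact sSup {μ : ℝ | Module.End.HasEigenvalue (Matrix.toLin' (G.adjMatrix ℝ)) μ}

/-- The number of edges of a graph on a finite vertex type. -/
noncomputable def edgeCount {V : Type*} [Fintype V] (G : SimpleGraph V) : ℕ := by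
  classical
  exact G.edgeFinset.card

/-- The degree of a vertex. -/
noncomputable def deg {n : ℕ} (G : SimpleGraph (Fin n)) (v : Fin n) : ℕ := by
  classical
  exact G.degree v

/-- The number of neighbours of `v` inside the set `A`. -/
noncomputable def degIn {n : ℕ} (G : SimpleGraph (Fin n)) (A : Finset (Fin n)) (v : Fin n) : ℕ := by
  classical
  exact (A.filter fun u => G.Adj v u).card

/-- The number of edges of `G` with one endpoint in `S` and the other outside `S`. -/
noncomputable def cutCount {n : ℕ} (G : SimpleGraph (Fin n)) (S : Finset (Fin n)) : ℕ := by
  classical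
  exact ((Finset.univ : Finset (Fin n × Fin n)).filter
    fun p => G.Adj p.1 p.2 ∧ p.1 ∈ S ∧ p.2 ∉ S).card

/-- `(S, T)` is a maximum cut of `G`. -/
def IsMaxCut {n : ℕ} (G : SimpleGraph (Fin n)) (S T : Finset (Fin n)) : Prop :=
  T = Sᶜ ∧ ∀ S' : Finset (Fin n), cutCount G S' ≤ cutCount G S

/-- `G` attains the maximum spectral radius among all `n`-vertex `W_t`-free graphs. -/
def IsSpexWheel (t : ℕ) {n : ℕ} (G : SimpleGraph (Fin n)) : Prop :=
  WheelFree t G ∧ ∀ H : SimpleGraph (Fin n), WheelFree t H → lam1 H ≤ lam1 G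

/-- `G` attains the maximum number of edges among all `n`-vertex `W_t`-free graphs. -/
def IsExWheel (t : ℕ) {n : ℕ} (G : SimpleGraph (Fin n)) : Prop :=
  WheelFree t G ∧ ∀ H : SimpleGraph (Fin n), WheelFree t H → edgeCount H ≤ edgeCount G

/-!
In a `W_{2k+1}`-free graph the neighbourhood of every vertex contains no cycle of length `2k`, hence
by the even cycle theorem spans only `O(k n^{1+1/k})` edges. Counting walks of length two from a
vertex `v` then gives `λ₁² ≤ e(G) + e(N(v))`, while `λ₁² ≥ ⌊n²/4⌋` by comparison with the balanced
complete bipartite graph, so `e(G)` is within `O(k n^{1+1/k})` of `n²/4`. On the other hand locally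
sparse graphs satisfy Mantel's bound up to a similar error, also after deleting the vertices of low
degree; deleting `s` vertices of degree at most `(1/2 - 1/p) n` wins about `sn/p` edges, so `s` is
`O(p k n^{1/k})`.

The even cycle theorem is proved by breadth-first search in a bipartite graph of large minimum
degree: if two consecutive levels spanned many edges, two branches of the search tree would close up
to a cycle of length `2k`; so the levels are sparse and must grow by a factor exceeding `n^{1/k}`,
which is impossible for `k` consecutive levels.
-/

open Finset

section EdgeCounting

variable {V : Type*} (G : SimpleGraph V) [DecidableRel G.Adj]

lemma card_interedges_eq_sum (S T : Finset V) :
    #(G.interedges S T) = ∑ v ∈ S, #{u ∈ T | G.Adj v u} := by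
  simp only [SimpleGraph.interedges, Rel.interedges, card_filter, sum_product]

/-- The edges inside `T` are those inside `T \ A` together with those meeting `A`, and only the
edges inside `A` are counted twice by summing degrees over `A`. -/
lemma card_interedges_self_add_card_interedges_self [DecidableEq V] {A T : Finset V} (hAT : A ⊆ T) :
    #(G.interedges T T) + #(G.interedges A A) =
      #(G.interedges (T \ A) (T \ A)) + 2 * #(G.interedges A T) := by
  have split_right (S : Finset V) :
      #(G.interedges S T) = #(G.interedges S (T \ A)) + #(G.interedges S A) := by
    simp only [SimpleGraph.interedges, Rel.interedges, card_filter, sum_product,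
      ← sum_sdiff hAT, sum_add_distrib]
  have split_left :
      #(G.interedges T T) = #(G.interedges (T \ A) T) + #(G.interedges A T) := by
    simp only [card_interedges_eq_sum, sum_sdiff hAT]
  have symm : #(G.interedges (T \ A) A) = #(G.interedges A (T \ A)) :=
    have := G.symm
    Rel.card_interedges_comm (r := G.Adj) (T \ A) A
  have := split_right (T \ A)
  have := split_right A
  lia

lemma lt_card_neighbors_of_minimal {a : ℕ} {T : Finset V}
    (hT : Minimal (fun T ↦ 2 * a * #T < #(G.interedges T T)) T) {v : V} (hv : v ∈ T) :
    a < #{u ∈ T | G.Adj v u} := by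
  classical
  have hvT : {v} ⊆ T := singleton_subset_iff.2 hv
  have hsdiff : T \ {v} ⊂ T := sdiff_ssubset hvT (singleton_nonempty v)
  have sparse : #(G.interedges (T \ {v}) (T \ {v})) ≤ 2 * a * #(T \ {v}) :=
    not_lt.1 (hT.not_prop_of_lt hsdiff)
  have count := card_interedges_self_add_card_interedges_self G hvT
  have hcard := card_sdiff_add_card_eq_card hvT
  have dense := hT.prop
  simp only [card_interedges_eq_sum G {v}, sum_singleton, card_singleton] at count hcard
  rw [← hcard] at dense
  lia

lemma connected_induce_of_minimal {a : ℕ} {T : Finset V}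
    (hT : Minimal (fun T ↦ 2 * a * #T < #(G.interedges T T)) T) :
    (G.induce (T : Set V)).Connected := by
  classical
  obtain ⟨v, hv⟩ : T.Nonempty := by
    rw [nonempty_iff_ne_empty]
    rintro rfl
    simpa using hT.prop
  let K := G.induce (T : Set V)
  let A : Finset V := {u ∈ T | ∃ hu : u ∈ T, K.Reachable ⟨v, hv⟩ ⟨u, hu⟩}
  have hAT : A ⊆ T := filter_subset _ _
  have hvA : v ∈ A := mem_filter.2 ⟨hv, hv, .rfl⟩
  have closed : G.interedges A T = G.interedges A A := by
    refine (G.interedges_mono subset_rfl hAT).antisymm' fun ⟨u, w⟩ huw ↦ ?_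
    obtain ⟨hu, hw, hadj⟩ := G.mk_mem_interedges_iff.1 huw
    obtain ⟨-, huT, hreach⟩ := mem_filter.1 hu
    have hK : K.Adj ⟨u, huT⟩ ⟨w, hw⟩ := hadj
    exact G.mk_mem_interedges_iff.2
      ⟨hu, mem_filter.2 ⟨hw, hw, hreach.trans hK.reachable⟩, hadj⟩
  have count := card_interedges_self_add_card_interedges_self G hAT
  have sparse_diff : #(G.interedges (T \ A) (T \ A)) ≤ 2 * a * #(T \ A) :=
    not_lt.1 (hT.not_prop_of_lt (sdiff_ssubset hAT ⟨v, hvA⟩))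
  have hcard := card_sdiff_add_card_eq_card hAT
  have hA : A = T := by
    by_contra hne
    have sparse : #(G.interedges A A) ≤ 2 * a * #A :=
      not_lt.1 (hT.not_prop_of_lt (hAT.ssubset_of_ne hne))
    have dense := hT.prop
    rw [← hcard] at dense
    rw [closed] at count
    linarith
  refine (SimpleGraph.connected_iff_exists_forall_reachable _).2 ⟨⟨v, hv⟩, fun ⟨u, hu⟩ ↦ ?_⟩
  exact (mem_filter.1 (hA ▸ hu : u ∈ A)).2.2

lemma degree_induce_eq_card_filter (T : Finset V) (v : (T : Set V)) :
    (G.induce (T : Set V)).degree v = #{u ∈ T | G.Adj v u} := by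
  rw [← SimpleGraph.card_neighborFinset_eq_degree, ← card_map (Function.Embedding.subtype _)]
  congr 1
  ext u
  simp [and_comm]

theorem exists_connected_induce_of_lt_card_interedges {a : ℕ} {S : Finset V}
    (hS : 2 * a * #S < #(G.interedges S S)) :
    ∃ T ⊆ S, (G.induce (T : Set V)).Connected ∧ ∀ v, a < (G.induce (T : Set V)).degree v := by
  classical
  obtain ⟨T, hTS, hT⟩ := exists_minimal_le_of_wellFoundedLT
    (fun T ↦ 2 * a * #T < #(G.interedges T T)) S hS
  refine ⟨T, hTS, connected_induce_of_minimal G hT, fun v ↦ ?_⟩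
  rw [degree_induce_eq_card_filter]
  exact lt_card_neighbors_of_minimal G hT v.2

theorem exists_coloring_card_interedges_le [Fintype V] :
    ∃ c : V → Bool, #(G.interedges univ univ) ≤
      2 * #{e ∈ G.interedges univ univ | c e.1 ≠ c e.2} := by
  classical
  have half {u v : V} (huv : u ≠ v) :
      2 * #{c : V → Bool | c u ≠ c v} = Fintype.card (V → Bool) := by
    have flip : #{c : V → Bool | c u ≠ c v} = #{c : V → Bool | ¬ c u ≠ c v} :=
      card_nbij' (fun c ↦ Function.update c u (!c u)) (fun c ↦ Function.update c u (!c u))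
        (by intro c; simp [huv.symm, Bool.eq_not]) (by intro c; simp [huv.symm])
        (by intro c _; simp) (by intro c _; simp)
    have := card_filter_add_card_filter_not (s := univ) fun c : V → Bool ↦ c u ≠ c v
    rw [card_univ] at this
    lia
  have double_count : ∑ _c : V → Bool, #(G.interedges univ univ) =
      ∑ c : V → Bool, 2 * #{e ∈ G.interedges univ univ | c e.1 ≠ c e.2} := by
    have swap := sum_card_bipartiteAbove_eq_sum_card_bipartiteBelow (s := univ)
      (t := G.interedges univ univ) fun (c : V → Bool) (e : V × V) ↦ c e.1 ≠ c e.2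
    rw [sum_const, smul_eq_mul, card_univ, ← mul_sum, mul_comm]
    simp only [bipartiteAbove, bipartiteBelow] at swap
    rw [swap, mul_sum]
    exact (sum_const_nat fun e he ↦ half (G.mem_interedges_iff.1 he).2.2.ne).symm
  obtain ⟨c, -, hc⟩ := exists_le_of_sum_le univ_nonempty double_count.le
  exact ⟨c, hc⟩

end EdgeCounting

section Paths

variable {V α : Type*} {G : SimpleGraph V}

lemma color_iff_not_color (c : G.Coloring Bool) {u v : V} (h : G.Adj u v) : c u ↔ ¬ c v := by
  have := c.valid h
  grind

lemma exists_isPath_length_eq_forall_notMem [G.LocallyFinite] {d : ℕ} (hd : ∀ v, d ≤ G.degree v)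
    (s : ℕ) {F : Finset V} (hs : #F + s ≤ d) {u : V} (hu : u ∉ F) :
    ∃ v, ∃ p : G.Walk u v, p.IsPath ∧ p.length = s ∧ ∀ x ∈ p.support, x ∉ F := by
  classical
  induction s generalizing F u with
  | zero => exact ⟨u, .nil, .nil, rfl, by simpa using hu⟩
  | succ s ih =>
    obtain ⟨w, hw, hwF⟩ : ∃ w ∈ G.neighborFinset u, w ∉ F :=
      exists_mem_notMem_of_card_lt_card (by have := hd u; rw [G.card_neighborFinset_eq_degree]; lia)
    rw [SimpleGraph.mem_neighborFinset] at hw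
    obtain ⟨v, p, hp, hlen, hF⟩ := ih (F := insert u F)
      (by rw [card_insert_of_notMem hu]; lia) (u := w) (by simp [hw.ne', hwF])
    simp only [mem_insert, not_or] at hF
    refine ⟨v, .cons hw p, hp.cons fun hup ↦ (hF u hup).1 rfl, by simp [hlen], ?_⟩
    simpa [hu] using fun x hx ↦ (hF x hx).2

lemma exists_adj_adj_ne_of_connected (hG : G.Connected) (c : G.Coloring Bool) (f : V → α)
    {u v : V} (hu : c u) (hv : c v) (huv : f u ≠ f v) :
    ∃ z a b, G.Adj z a ∧ G.Adj z b ∧ c a ∧ c b ∧ f a ≠ f b := by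
  let S : Set V := {x | (c x ∧ f x = f u) ∨ (¬ c x ∧ ∃ w, G.Adj x w ∧ f w = f u)}
  obtain ⟨p⟩ := hG.preconnected u v
  obtain ⟨⟨⟨x, y⟩, hxy⟩, -, hx, hy⟩ := p.exists_boundary_dart S (by simp [S, hu])
    (by simpa [S, hv] using huv.symm)
  have hcxy := color_iff_not_color c hxy
  simp only [S, Set.mem_ofPred_eq, not_or, not_and, not_exists] at hx hy
  rcases hx with ⟨hcx, hfx⟩ | ⟨hcx, w, hxw, hfw⟩
  · exact absurd hfx (hy.2 (hcxy.1 hcx) x hxy.symm)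
  · have hcy : c y := by tauto
    have hcw : c w := by have := color_iff_not_color c hxw; tauto
    exact ⟨x, w, y, hxw, hxy, hcw, hcy, fun h ↦ hy.1 hcy (h ▸ hfw)⟩

theorem exists_isPath_length_two_mul_ne [G.LocallyFinite] (hG : G.Connected) (c : G.Coloring Bool)
    (f : V → α) {u v : V} (hu : c u) (hv : c v) (huv : f u ≠ f v)
    {s : ℕ} (hs : 0 < s) (hdeg : ∀ v, 2 * s + 1 ≤ G.degree v) :
    ∃ x y, ∃ p : G.Walk x y, c x ∧ c y ∧ f x ≠ f y ∧ p.IsPath ∧ p.length = 2 * s := by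
  classical
  obtain ⟨z, a, b, hza, hzb, hca, hcb, hab⟩ := exists_adj_adj_ne_of_connected hG c f hu hv huv
  have hne : a ≠ b := fun h ↦ hab (h ▸ rfl)
  obtain ⟨m, hzm, hm⟩ : ∃ m ∈ G.neighborFinset z, m ∉ ({a, b} : Finset V) :=
    exists_mem_notMem_of_card_lt_card (by
      have := hdeg z
      rw [G.card_neighborFinset_eq_degree, card_pair hne]
      lia)
  rw [SimpleGraph.mem_neighborFinset] at hzm
  obtain ⟨e, p, hp, hlen, hF⟩ := exists_isPath_length_eq_forall_notMem hdeg (2 * (s - 1))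
    (F := {z, a, b}) (by have := card_le_three (a := z) (b := a) (c := b); lia) (u := m)
    (by simpa [hzm.ne'] using hm)
  simp only [mem_insert, mem_singleton, not_or] at hF
  have extend {w : V} (hzw : G.Adj z w) (hcw : c w) (hwp : w ∉ p.support) (hwe : f w ≠ f e) :
      ∃ x y, ∃ p : G.Walk x y, c x ∧ c y ∧ f x ≠ f y ∧ p.IsPath ∧ p.length = 2 * s := by
    have hlength : (SimpleGraph.Walk.cons hzw.symm (.cons hzm p)).length = 2 * s := by
      simp only [SimpleGraph.Walk.length_cons, hlen]
      lia
    have hcol := c.even_length_iff_congr (.cons hzw.symm (.cons hzm p))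
    refine ⟨w, e, _, hcw, (hcol.1 (by simp [hlength])).1 hcw, hwe, ?_, hlength⟩
    exact (hp.cons fun h ↦ (hF z h).1 rfl).cons (by simp [hzw.ne', hwp])
  by_cases hae : f a = f e
  · exact extend hzb hcb (fun h ↦ (hF b h).2.2 rfl) (hae ▸ hab.symm)
  · exact extend hza hca (fun h ↦ (hF a h).2.1 rfl) hae

end Paths

/-- The parent map of a breadth-first search tree of `G` rooted at `r`: every vertex other than
`r` is sent to a neighbour one step closer to `r`. -/
def IsParentMap {V : Type*} (G : SimpleGraph V) (r : V) (par : V → V) : Prop :=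
  ∀ v, v ≠ r → G.Adj v (par v) ∧ G.dist r v = G.dist r (par v) + 1

section BreadthFirstSearch

variable {V : Type*} {G : SimpleGraph V} {r : V} {par : V → V}

lemma exists_adj_dist_eq_dist_add_one (hG : G.Connected) {r v : V} (hv : v ≠ r) :
    ∃ u, G.Adj v u ∧ G.dist r v = G.dist r u + 1 := by
  obtain ⟨p, hp⟩ := hG.exists_walk_length_eq_dist v r
  cases p with
  | nil => exact absurd rfl hv
  | @cons _ u _ hvu p =>
    refine ⟨u, hvu, le_antisymm ?_ ?_⟩
    · simpa [G.dist_eq_one_iff_adj.2 hvu.symm] using hG.dist_triangle (u := r) (v := u) (w := v)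
    · rw [SimpleGraph.dist_comm, SimpleGraph.dist_comm (u := r), ← hp]
      exact Nat.add_le_add_right (SimpleGraph.dist_le p) 1

lemma exists_isParentMap (hG : G.Connected) (r : V) : ∃ par, IsParentMap G r par := by
  choose! par h using fun v (hv : v ≠ r) ↦ exists_adj_dist_eq_dist_add_one hG hv
  exact ⟨par, h⟩

namespace IsParentMap

lemma adj_and_dist (h : IsParentMap G r par) {v : V} (hv : 0 < G.dist r v) :
    G.Adj v (par v) ∧ G.dist r v = G.dist r (par v) + 1 :=
  h v (by rintro rfl; simp at hv)

lemma dist_iterate (h : IsParentMap G r par) {t : ℕ} {v : V} (ht : t ≤ G.dist r v) :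
    G.dist r (par^[t] v) = G.dist r v - t := by
  induction t generalizing v with
  | zero => simp
  | succ t ih =>
    have := (h.adj_and_dist (by lia : 0 < G.dist r v)).2
    rw [Function.iterate_succ_apply, ih (by lia)]
    lia

lemma exists_isPath_iterate (h : IsParentMap G r par) {t : ℕ} {v w : V} (ht : t ≤ G.dist r v)
    (hw : par^[t] v = w) :
    ∃ p : G.Walk v w, p.IsPath ∧ p.length = t ∧ ∀ x ∈ p.support, ∃ j ≤ t, x = par^[j] v := by
  induction t generalizing v with
  | zero => exact hw ▸ ⟨.nil, .nil, rfl, by simp⟩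
  | succ t ih =>
    obtain ⟨hadj, hdist⟩ := h.adj_and_dist (by lia : 0 < G.dist r v)
    obtain ⟨p, hp, hlen, hsupp⟩ := ih (v := par v) (by lia) hw
    refine ⟨.cons hadj p, hp.cons fun hv ↦ ?_, by simp [hlen], ?_⟩
    · obtain ⟨j, hj, hvj⟩ := hsupp v hv
      have := h.dist_iterate (t := j) (v := par v) (by lia)
      rw [← hvj] at this
      lia
    · rintro x (_ | ⟨_, hx⟩)
      · exact ⟨0, by simp, rfl⟩
      · obtain ⟨j, hj, rfl⟩ := hsupp x hx
        exact ⟨j + 1, by lia, rfl⟩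

/-- The path climbs from `u` to the first common ancestor of `u` and `v` and descends to `v`. -/
lemma exists_isPath_through_ancestor (h : IsParentMap G r par) {i t : ℕ} {u v w : V}
    (hu : G.dist r u = i) (hv : G.dist r v = i) (ht : t < i)
    (huw : par^[t + 1] u = w) (hvw : par^[t + 1] v = w) (hne : par^[t] u ≠ par^[t] v) :
    ∃ p : G.Walk u v, p.IsPath ∧ p.length = 2 * (t + 1) ∧
      ∀ x ∈ p.support, x = u ∨ x = v ∨ G.dist r x < i := by
  have below {j : ℕ} {w : V} (hw : G.dist r w = i) (hj : j ≤ t + 1) :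
      par^[j] w = w ∨ G.dist r (par^[j] w) < i := by
    have := h.dist_iterate (t := j) (v := w) (by lia)
    rcases j.eq_zero_or_pos with rfl | hj0
    · exact .inl rfl
    · right; lia
  obtain ⟨p, hp, hlen, hsupp⟩ := h.exists_isPath_iterate (by lia) huw
  obtain ⟨q, hq, hlen', hsupp'⟩ := h.exists_isPath_iterate (by lia) hvw
  have meet {x : V} (hxp : x ∈ p.support) (hxq : x ∈ q.support) : x = w := by
    obtain ⟨j, hj, rfl⟩ := hsupp x hxp
    obtain ⟨l, hl, hjl⟩ := hsupp' _ hxq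
    have hdj := h.dist_iterate (t := j) (v := u) (by lia)
    have hdl := h.dist_iterate (t := l) (v := v) (by lia)
    obtain rfl : j = l := by rw [hjl] at hdj; lia
    by_contra hxt
    have hjt : j ≤ t := by grind
    refine hne ?_
    rw [← Nat.sub_add_cancel hjt, Function.iterate_add_apply, hjl, ← Function.iterate_add_apply]
  have disjoint : p.support.Disjoint q.reverse.support.tail := fun x hxp hxq ↦ by
    have hnodup := hq.reverse.support_nodup
    obtain rfl := meet hxp (by simpa using List.mem_of_mem_tail hxq)
    rw [← SimpleGraph.Walk.cons_tail_support] at hnodup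
    exact (List.nodup_cons.1 hnodup).1 hxq
  refine ⟨p.append q.reverse, ?_, by simp [hlen, hlen', two_mul], fun x hx ↦ ?_⟩
  · rw [SimpleGraph.Walk.isPath_def, SimpleGraph.Walk.support_append]
    exact hp.support_nodup.append hq.reverse.support_nodup.tail disjoint
  · rcases SimpleGraph.Walk.mem_support_append_iff _ _ |>.1 hx with hx | hx
    · obtain ⟨j, hj, rfl⟩ := hsupp x hx
      exact (below hu hj).imp_right .inr
    · obtain ⟨j, hj, rfl⟩ := hsupp' x (by simpa using hx)
      exact .inr (below hv hj)

end IsParentMap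

lemma exists_isCycle_of_isPath_of_isPath_below {f : V → ℕ} {i m n : ℕ} {u v : V} {p q : G.Walk u v}
    (hp : p.IsPath) (hq : q.IsPath) (hpm : p.length = m) (hqn : q.length = n) (hn : 1 < n)
    (above : ∀ x ∈ p.support, i ≤ f x) (below : ∀ x ∈ q.support, x = u ∨ x = v ∨ f x < i) :
    ∃ v, ∃ c : G.Walk v v, c.IsCycle ∧ c.length = m + n := by
  refine ⟨u, p.append q.reverse, hp.isCycle_append hq.reverse ?_ (.inr (by simpa [hqn])),
    by simp [hpm, hqn]⟩
  have hnodup {a b : V} {w : G.Walk a b} (hw : w.IsPath) : a ∉ w.support.tail := by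
    have := hw.support_nodup
    rw [← w.cons_tail_support] at this
    exact (List.nodup_cons.1 this).1
  intro x hxp hxq
  have hx : x ∈ q.support := by simpa using List.mem_of_mem_tail hxq
  rcases below x hx with rfl | rfl | hlt
  · exact hnodup hp hxp
  · exact hnodup hq.reverse hxq
  · exact hlt.not_ge (above x (List.mem_of_mem_tail hxp))

lemma exists_color_true_ne [Nonempty V] [G.LocallyFinite] (c : G.Coloring Bool)
    (hdeg : ∀ v, 2 ≤ G.degree v) : ∃ x y, c x ∧ c y ∧ x ≠ y := by
  have two_neighbors (v : V) : ∃ x y, G.Adj v x ∧ G.Adj v y ∧ x ≠ y := by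
    obtain ⟨x, hx, y, hy, hxy⟩ :=
      one_lt_card.1 ((hdeg v).trans_eq (G.card_neighborFinset_eq_degree v).symm)
    exact ⟨x, y, by simpa using hx, by simpa using hy, hxy⟩
  obtain ⟨v⟩ := ‹Nonempty V›
  obtain ⟨w, -, hvw, -⟩ := two_neighbors v
  obtain ⟨z, hz⟩ : ∃ z, ¬ c z := by
    by_cases hv : c v
    · exact ⟨w, fun hw ↦ (color_iff_not_color c hvw).1 hv hw⟩
    · exact ⟨v, hv⟩
  obtain ⟨x, y, hzx, hzy, hxy⟩ := two_neighbors z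
  exact ⟨x, y, (color_iff_not_color c hzx.symm).2 hz, (color_iff_not_color c hzy.symm).2 hz, hxy⟩

lemma IsParentMap.exists_iterate_ne_and_iterate_succ_eq (h : IsParentMap G r par)
    (hG : G.Connected) {i : ℕ} {Y : Set V} (hY : Y.Nontrivial) (hYi : ∀ v ∈ Y, G.dist r v = i) :
    ∃ t < i, (∀ u ∈ Y, ∀ v ∈ Y, par^[t + 1] u = par^[t + 1] v) ∧
      ∃ u ∈ Y, ∃ v ∈ Y, par^[t] u ≠ par^[t] v := by
  let Merges (t : ℕ) : Prop := ∀ u ∈ Y, ∀ v ∈ Y, par^[t] u = par^[t] v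
  have to_root {v : V} (hv : v ∈ Y) : par^[i] v = r := by
    have := h.dist_iterate (hYi v hv).ge
    rw [hYi v hv, Nat.sub_self, hG.dist_eq_zero_iff] at this
    exact this.symm
  have merges_i : Merges i := fun u hu v hv ↦ (to_root hu).trans (to_root hv).symm
  obtain ⟨x, hx, y, hy, hxy⟩ := hY
  obtain ⟨t, hnot, hmerge⟩ := Nat.exists_not_and_succ_of_not_zero_of_exists (p := Merges)
    (fun h0 ↦ hxy (h0 x hx y hy)) ⟨i, merges_i⟩
  refine ⟨t, ?_, hmerge, by simpa [Merges] using hnot⟩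
  by_contra! hit
  refine hnot fun u hu v hv ↦ ?_
  rw [← Nat.sub_add_cancel hit, Function.iterate_add_apply, Function.iterate_add_apply,
    merges_i u hu v hv]

/-- Climb from two vertices of level `i` whose ancestors at height `t` differ while those at height
`t + 1` agree, and close up with a path of length `2 * (k - (t + 1))` inside the two levels. -/
theorem exists_isCycle_of_connected_induce_levels (hG : G.Connected)
    (hlevel : ∀ u v, G.Adj u v → G.dist r u ≠ G.dist r v) {i k : ℕ} (hik : i < k) {T : Set V}
    (hTi : ∀ v ∈ T, G.dist r v = i ∨ G.dist r v = i + 1) (hT : (G.induce T).Connected)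
    [(G.induce T).LocallyFinite] (hdeg : ∀ v, 2 * k ≤ (G.induce T).degree v) :
    ∃ v, ∃ c : G.Walk v v, c.IsCycle ∧ c.length = 2 * k := by
  classical
  obtain ⟨par, hpar⟩ := exists_isParentMap hG r
  let K := G.induce T
  let c : K.Coloring Bool := .mk (fun v ↦ decide (G.dist r v = i)) fun {u v} huv ↦ by
    have := hlevel u v huv
    have := hTi u u.2
    have := hTi v v.2
    simp only [ne_eq, decide_eq_decide]
    lia
  have hc (v : T) : c v ↔ G.dist r v = i := decide_eq_true_iff
  obtain ⟨⟨x, hx⟩, ⟨y, hy⟩, hcx, hcy, hxy⟩ :=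
    haveI := hT.nonempty; exists_color_true_ne c fun v ↦ by have := hdeg v; lia
  obtain ⟨t, hti, merge, u, hu, v, hv, huv⟩ := hpar.exists_iterate_ne_and_iterate_succ_eq hG
    (Y := {v ∈ T | G.dist r v = i})
    ⟨x, ⟨hx, (hc _).1 hcx⟩, y, ⟨hy, (hc _).1 hcy⟩, by simpa using hxy⟩ fun v hv ↦ hv.2
  obtain ⟨x, y, p, hcx, hcy, hne, hp, hlen⟩ := exists_isPath_length_two_mul_ne hT c
    (fun x ↦ par^[t] x) (u := ⟨u, hu.1⟩) (v := ⟨v, hv.1⟩) ((hc _).2 hu.2) ((hc _).2 hv.2) huv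
    (s := k - (t + 1)) (by lia) fun v ↦ by have := hdeg v; lia
  rw [hc] at hcx hcy
  obtain ⟨q, hq, hqlen, below⟩ := hpar.exists_isPath_through_ancestor hcx hcy hti
    (merge x ⟨x.2, hcx⟩ y ⟨y.2, hcy⟩) rfl hne
  obtain ⟨z, C, hC, hlenC⟩ := exists_isCycle_of_isPath_of_isPath_below
    (hp.map (f := (SimpleGraph.Embedding.induce T).toHom) Subtype.val_injective) hq
    ((p.length_map _).trans hlen) hqlen (by lia) (f := G.dist r) (i := i) (fun w hw ↦ by
      obtain ⟨w, -, rfl⟩ := List.mem_map.1 (p.support_map _ ▸ hw)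
      rcases hTi w w.2 with h | h <;> exact h ▸ by simp) below
  exact ⟨z, C, hC, by lia⟩

lemma dist_ne_of_adj_of_coloring (hG : G.Connected) (c : G.Coloring Bool) {u v : V}
    (h : G.Adj u v) : G.dist r u ≠ G.dist r v := by
  obtain ⟨p, hp⟩ := hG.exists_walk_length_eq_dist r u
  obtain ⟨q, hq⟩ := hG.exists_walk_length_eq_dist r v
  have hcp := c.even_length_iff_congr p
  have hcq := c.even_length_iff_congr q
  have := color_iff_not_color c h
  rw [← hp, ← hq]
  intro hlen
  rw [hlen] at hcp
  tauto

variable [Fintype V]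

/-- The level of the vertices at distance `i` from the root `r`. -/
noncomputable def distLevel (G : SimpleGraph V) (r : V) (i : ℕ) : Finset V :=
  {v | G.dist r v = i}

lemma mem_distLevel {v : V} {i : ℕ} : v ∈ distLevel G r i ↔ G.dist r v = i := by
  simp [distLevel]

variable [DecidableRel G.Adj]

lemma card_interedges_distLevel_le (hG : G.Connected)
    (hlevel : ∀ u v, G.Adj u v → G.dist r u ≠ G.dist r v) {k : ℕ}
    (hfree : ∀ v, ∀ c : G.Walk v v, c.IsCycle → c.length ≠ 2 * k) {i : ℕ} (hik : i < k) :
    #(G.interedges (distLevel G r i) (distLevel G r (i + 1))) ≤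
      2 * k * (#(distLevel G r i) + #(distLevel G r (i + 1))) := by
  classical
  by_contra! hlt
  let L := distLevel G r
  have independent : #(G.interedges (L i) (L i)) = 0 := by
    refine card_eq_zero.2 <| eq_empty_of_forall_notMem fun ⟨u, v⟩ huv ↦ ?_
    obtain ⟨hu, hv, hadj⟩ := G.mk_mem_interedges_iff.1 huv
    exact hlevel u v hadj ((mem_distLevel.1 hu).trans (mem_distLevel.1 hv).symm)
  have count := card_interedges_self_add_card_interedges_self G
    (subset_union_left : L i ⊆ L i ∪ L (i + 1))
  have hmono : #(G.interedges (L i) (L (i + 1))) ≤ #(G.interedges (L i) (L i ∪ L (i + 1))) :=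
    card_le_card (G.interedges_mono subset_rfl subset_union_right)
  have hcard := card_union_le (L i) (L (i + 1))
  obtain ⟨T, hTL, hT, hdeg⟩ := exists_connected_induce_of_lt_card_interedges G (a := 2 * k)
    (S := L i ∪ L (i + 1)) (by nlinarith)
  obtain ⟨v, c, hc, hlen⟩ := exists_isCycle_of_connected_induce_levels hG hlevel hik (T := T)
    (fun v hv ↦ by simpa [L, mem_distLevel] using hTL hv) hT fun v ↦ (hdeg v).le
  exact hfree v c hc hlen

lemma sum_degree_distLevel_zero_le (hG : G.Connected) :
    ∑ v ∈ distLevel G r 0, G.degree v ≤ #(G.interedges (distLevel G r 0) (distLevel G r 1)) := by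
  rw [card_interedges_eq_sum]
  refine sum_le_sum fun v hv ↦ card_le_card fun u hu ↦ ?_
  obtain rfl : r = v := hG.dist_eq_zero_iff.1 (mem_distLevel.1 hv)
  rw [SimpleGraph.mem_neighborFinset] at hu
  simp [mem_distLevel, hu]

lemma sum_degree_distLevel_succ_le (hlevel : ∀ u v, G.Adj u v → G.dist r u ≠ G.dist r v) (i : ℕ) :
    ∑ v ∈ distLevel G r (i + 1), G.degree v ≤
      #(G.interedges (distLevel G r i) (distLevel G r (i + 1))) +
        #(G.interedges (distLevel G r (i + 1)) (distLevel G r (i + 2))) := by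
  classical
  have symm : #(G.interedges (distLevel G r i) (distLevel G r (i + 1))) =
      #(G.interedges (distLevel G r (i + 1)) (distLevel G r i)) :=
    have := G.symm
    Rel.card_interedges_comm (r := G.Adj) _ _
  rw [symm, card_interedges_eq_sum, card_interedges_eq_sum, ← sum_add_distrib]
  refine sum_le_sum fun v hv ↦ (card_le_card fun u hu ↦ ?_).trans (card_union_le _ _)
  rw [SimpleGraph.mem_neighborFinset] at hu
  rw [mem_distLevel] at hv
  have := hu.diff_dist_adj (u := r)
  have := hlevel v u hu
  simp only [mem_union, mem_filter, mem_distLevel, hu, and_true]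
  lia

lemma mul_card_distLevel_le_card_distLevel_succ (hG : G.Connected)
    (hlevel : ∀ u v, G.Adj u v → G.dist r u ≠ G.dist r v) {k q : ℕ} (hq : 0 < q)
    (hfree : ∀ v, ∀ c : G.Walk v v, c.IsCycle → c.length ≠ 2 * k)
    (hdeg : ∀ v, 2 * k * (q + 3) ≤ G.degree v) {i : ℕ} (hik : i < k) :
    q * #(distLevel G r i) ≤ #(distLevel G r (i + 1)) := by
  have many_edges (j : ℕ) : #(distLevel G r j) * (2 * k * (q + 3)) ≤
      ∑ v ∈ distLevel G r j, G.degree v :=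
    card_nsmul_le_sum _ _ _ fun v _ ↦ hdeg v
  have few_edges {j : ℕ} (hj : j < k) := card_interedges_distLevel_le hG hlevel hfree hj
  refine Nat.le_of_mul_le_mul_left (c := 2 * k) ?_ (by lia)
  induction i with
  | zero =>
    have := (many_edges 0).trans ((sum_degree_distLevel_zero_le hG).trans (few_edges hik))
    rw [zero_add] at this ⊢
    nlinarith
  | succ i ih =>
    have grows : #(distLevel G r i) ≤ #(distLevel G r (i + 1)) :=
      (Nat.le_mul_of_pos_left _ hq).trans (Nat.le_of_mul_le_mul_left (ih (by lia)) (by lia))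
    have := (many_edges (i + 1)).trans ((sum_degree_distLevel_succ_le hlevel i).trans
      (add_le_add (few_edges (by lia : i < k)) (few_edges hik)))
    nlinarith

theorem exists_isCycle_of_connected_of_le_degree (hG : G.Connected) (c : G.Coloring Bool)
    {k q : ℕ} (hcard : Fintype.card V < q ^ k) (hdeg : ∀ v, 2 * k * (q + 3) ≤ G.degree v) :
    ∃ v, ∃ c : G.Walk v v, c.IsCycle ∧ c.length = 2 * k := by
  by_contra! hfree
  obtain ⟨r⟩ := hG.nonempty
  have hk : k ≠ 0 := by
    rintro rfl
    have := Fintype.card_pos_iff.2 hG.nonempty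
    lia
  have hq : 0 < q := Nat.pos_of_ne_zero fun hq ↦ by simp [hq, hk] at hcard
  have growth {i : ℕ} (hi : i ≤ k) : q ^ i ≤ #(distLevel G r i) := by
    induction i with
    | zero => exact card_pos.2 ⟨r, mem_distLevel.2 (by simp)⟩
    | succ i ih =>
      calc q ^ (i + 1) = q * q ^ i := pow_succ' q i
        _ ≤ q * #(distLevel G r i) := Nat.mul_le_mul_left q (ih (by lia))
        _ ≤ #(distLevel G r (i + 1)) := mul_card_distLevel_le_card_distLevel_succ hG
            (fun u v ↦ dist_ne_of_adj_of_coloring hG c) hq hfree hdeg hi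
  exact hcard.not_ge ((growth le_rfl).trans (card_le_univ _))

end BreadthFirstSearch

section EvenCycle

variable {V : Type*} {G : SimpleGraph V} [DecidableRel G.Adj]

theorem exists_isCycle_of_lt_card_interedges [Fintype V] {k q : ℕ} (hcard : Fintype.card V < q ^ k)
    (hG : 8 * k * (q + 3) * Fintype.card V < #(G.interedges univ univ)) :
    ∃ v, ∃ c : G.Walk v v, c.IsCycle ∧ c.length = 2 * k := by
  classical
  obtain ⟨f, hf⟩ := exists_coloring_card_interedges_le G
  let H : SimpleGraph V := G ⊓ (⊤ : SimpleGraph Bool).comap f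
  have hH : H.interedges univ univ = {e ∈ G.interedges univ univ | f e.1 ≠ f e.2} := by
    ext e
    simp [SimpleGraph.mem_interedges_iff, H]
  obtain ⟨T, -, hT, hdeg⟩ := exists_connected_induce_of_lt_card_interedges H
    (a := 2 * k * (q + 3)) (S := univ) (by rw [hH, card_univ]; lia)
  let color : (H.induce (T : Set V)).Coloring Bool := .mk (fun v ↦ f v) fun huv ↦ huv.2
  obtain ⟨v, c, hc, hlen⟩ := exists_isCycle_of_connected_of_le_degree hT color
    ((Fintype.card_subtype_le _).trans_lt hcard) fun v ↦ (hdeg v).le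
  let φ : H.induce (T : Set V) →g G :=
    (SimpleGraph.Hom.ofLE inf_le_left).comp (SimpleGraph.Embedding.induce (T : Set V)).toHom
  exact ⟨φ v, c.map φ, hc.map Subtype.val_injective, by simp [hlen]⟩

theorem exists_isCycle_of_lt_card_interedges_self {S : Finset V} {k q : ℕ} (hcard : #S < q ^ k)
    (hS : 8 * k * (q + 3) * #S < #(G.interedges S S)) :
    ∃ v, ∃ c : G.Walk v v, c.IsCycle ∧ c.length = 2 * k ∧ ∀ x ∈ c.support, x ∈ S := by
  have hinduce : #((G.induce (S : Set V)).interedges univ univ) = #(G.interedges S S) := by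
    simp only [card_interedges_eq_sum, ← sum_coe_sort S]
    exact sum_congr rfl fun v _ ↦ by
      rw [← degree_induce_eq_card_filter, ← SimpleGraph.card_neighborFinset_eq_degree,
        SimpleGraph.neighborFinset_eq_filter]
  obtain ⟨v, c, hc, hlen⟩ := exists_isCycle_of_lt_card_interedges (G := G.induce (S : Set V))
    (by simpa using hcard) (by rw [hinduce]; simpa using hS)
  let φ := (SimpleGraph.Embedding.induce (G := G) (S : Set V)).toHom
  refine ⟨φ v, c.map φ, hc.map Subtype.val_injective, by simp [hlen], fun x hx ↦ ?_⟩
  rw [SimpleGraph.Walk.support_map] at hx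
  obtain ⟨y, -, rfl⟩ := List.mem_map.1 hx
  exact y.2

end EvenCycle

section LocallySparse

/-- Sparseness of neighbourhoods at every scale: each set `S` of neighbours of a vertex contains at
most `b * #S` adjacent ordered pairs, so every edge inside `S` is counted twice. -/
def LocallySparse {V : Type*} (G : SimpleGraph V) [DecidableRel G.Adj] (b : ℕ) : Prop :=
  ∀ v, ∀ S : Finset V, (∀ u ∈ S, G.Adj v u) → #(G.interedges S S) ≤ b * #S

variable {V : Type*} {G : SimpleGraph V}

lemma containsCopy_wheelGraph_of_isCycle {v w : V} {c : G.Walk w w} (hc : c.IsCycle)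
    (hv : ∀ x ∈ c.support, G.Adj v x) : ContainsCopy (wheelGraph (c.length + 1)) G := by
  have hlen := hc.three_le_length
  have spoke (i : ℕ) : G.Adj v (c.getVert i) := hv _ (c.getVert_mem_support i)
  have rim {i : ℕ} (hi : i < c.length) : G.Adj (c.getVert i) (c.getVert (i + 1)) :=
    c.adj_getVert_succ hi
  have closing_edge : G.Adj (c.getVert c.length) (c.getVert 1) := by
    simpa using rim (i := 0) (by lia)
  let f (i : Fin (c.length + 1)) : V := if i.val = 0 then v else c.getVert i
  have hf : Function.Injective f := fun ⟨i, hi⟩ ⟨j, hj⟩ hij ↦ by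
    simp only [f] at hij
    split_ifs at hij with hi0 hj0 hj0
    · simp [hi0, hj0]
    · exact absurd hij (spoke j).ne
    · exact absurd hij (spoke i).ne'
    · simpa using hc.getVert_injOn ⟨by lia, by lia⟩ ⟨by lia, by lia⟩ hij
  refine ⟨⟨f, hf⟩, fun ⟨i, hi⟩ ⟨j, hj⟩ ⟨hne, h⟩ ↦ ?_⟩
  simp only [Function.Embedding.coeFn_mk, f]
  split_ifs with hi0 hj0 hj0
  · exact absurd (Fin.ext (hi0.trans hj0.symm)) hne
  · exact spoke j
  · exact (spoke i).symm
  · rcases h with h | h | rfl | rfl | ⟨rfl, rfl⟩ | ⟨rfl, rfl⟩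
    · exact absurd h hi0
    · exact absurd h hj0
    · exact rim (by lia)
    · exact (rim (by lia)).symm
    · exact closing_edge.symm
    · exact closing_edge

theorem WheelFree.locallySparse {n k q : ℕ} {G : SimpleGraph (Fin n)} [DecidableRel G.Adj]
    (hG : WheelFree (2 * k + 1) G) (hn : n < q ^ k) : LocallySparse G (8 * k * (q + 3)) := by
  intro v S hS
  by_contra! hdense
  obtain ⟨w, c, hc, hlen, hcS⟩ := exists_isCycle_of_lt_card_interedges_self
    ((card_finset_fin_le S).trans_lt hn) hdense
  exact hG (hlen ▸ containsCopy_wheelGraph_of_isCycle hc fun x hx ↦ hS x (hcS x hx))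

variable [DecidableRel G.Adj]

theorem LocallySparse.two_mul_card_interedges_le {b : ℕ} (hG : LocallySparse G b) (U : Finset V) :
    2 * #(G.interedges U U) ≤ 2 * b * #U + #U ^ 2 := by
  classical
  rcases U.eq_empty_or_nonempty with rfl | hU
  · simp
  obtain ⟨v, -, hmax⟩ := exists_max_image U (fun v ↦ #{u ∈ U | G.Adj v u}) hU
  let N : Finset V := {u ∈ U | G.Adj v u}
  have hN : N ⊆ U := filter_subset _ _
  have sparse : #(G.interedges N N) ≤ b * #N := hG v N fun u hu ↦ (mem_filter.1 hu).2
  have outside : #(G.interedges (U \ N) U) ≤ #(U \ N) * #N := by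
    rw [card_interedges_eq_sum]
    exact sum_le_card_nsmul _ _ _ fun w hw ↦ hmax w (mem_sdiff.1 hw).1
  have count := card_interedges_self_add_card_interedges_self G (sdiff_subset : U \ N ⊆ U)
  rw [Finset.sdiff_sdiff_eq_self hN] at count
  have am_gm := four_mul_le_sq_add #(U \ N) #N
  have hcard := card_sdiff_add_card_eq_card hN
  rw [← hcard]
  nlinarith

end LocallySparse

section SpectralRadius

lemma sq_le_of_hasEigenvalue_adjMatrix {V : Type*} [Fintype V] [DecidableEq V] {G : SimpleGraph V}
    [DecidableRel G.Adj] {μ B : ℝ} (hB : ∀ v, ∑ w ∈ G.neighborFinset v, (G.degree w : ℝ) ≤ B)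
    (hμ : Module.End.HasEigenvalue (Matrix.toLin' (G.adjMatrix ℝ)) μ) : μ ^ 2 ≤ B := by
  obtain ⟨x, hx⟩ := hμ.exists_hasEigenvector
  have eigen (v : V) : ∑ u ∈ G.neighborFinset v, x u = μ * x v := by
    simpa using congrFun hx.apply_eq_smul v
  obtain ⟨i, hi⟩ := Function.ne_iff.1 hx.2
  obtain ⟨v, -, hmax⟩ := exists_max_image univ (fun i ↦ |x i|) ⟨i, mem_univ i⟩
  have hpos : 0 < |x v| := (abs_pos.2 hi).trans_le (hmax i (mem_univ i))
  refine (le_of_mul_le_mul_right ?_ hpos).trans (hB v)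
  calc μ ^ 2 * |x v| = |μ * (μ * x v)| := by rw [← abs_sq μ, ← abs_mul]; ring_nf
    _ = |∑ w ∈ G.neighborFinset v, ∑ u ∈ G.neighborFinset w, x u| := by
        simp only [eigen, ← mul_sum]
    _ ≤ ∑ w ∈ G.neighborFinset v, ∑ u ∈ G.neighborFinset w, |x u| :=
        (abs_sum_le_sum_abs _ _).trans (sum_le_sum fun w _ ↦ abs_sum_le_sum_abs _ _)
    _ ≤ ∑ w ∈ G.neighborFinset v, G.degree w * |x v| := sum_le_sum fun w _ ↦ by
        simpa using sum_le_card_nsmul (G.neighborFinset w) _ _ fun u _ ↦ hmax u (mem_univ u)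
    _ = (∑ w ∈ G.neighborFinset v, (G.degree w : ℝ)) * |x v| := (sum_mul _ _ _).symm

lemma hasEigenvalue_adjMatrix_of_adj_iff {V : Type*} [Fintype V] [DecidableEq V]
    {G : SimpleGraph V} [DecidableRel G.Adj] {A : Finset V} (hA : A.Nonempty) (hA' : Aᶜ.Nonempty)
    (hG : ∀ u v, G.Adj u v ↔ (u ∈ A ↔ v ∉ A)) :
    Module.End.HasEigenvalue (Matrix.toLin' (G.adjMatrix ℝ)) √(#A * #Aᶜ) := by
  let μ : ℝ := √(#A * #Aᶜ)
  have hμ : μ * μ = #A * #Aᶜ := Real.mul_self_sqrt (by positivity)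
  refine Module.End.hasEigenvalue_of_hasEigenvector (x := fun v ↦ if v ∈ A then μ else #A)
    ⟨Module.End.mem_eigenspace_iff.2 (funext fun v ↦ ?_), fun h ↦ ?_⟩
  · rw [Matrix.toLin'_apply, SimpleGraph.adjMatrix_mulVec_apply, Pi.smul_apply, smul_eq_mul]
    change _ = μ * _
    by_cases hv : v ∈ A
    · have : G.neighborFinset v = Aᶜ := by ext; simp [hG, hv]
      rw [this, sum_congr rfl fun u hu ↦ if_neg (mem_compl.1 hu), if_pos hv, hμ, sum_const,
        nsmul_eq_mul, mul_comm]
    · have : G.neighborFinset v = A := by ext; simp [hG, hv]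
      rw [this, sum_congr rfl fun u hu ↦ if_pos hu, if_neg hv, sum_const, nsmul_eq_mul, mul_comm]
  · obtain ⟨v, hv⟩ := hA'
    have := congrFun h v
    rw [if_neg (mem_compl.1 hv)] at this
    exact hA.card_ne_zero (Nat.cast_eq_zero.1 this)

variable {n : ℕ} {G : SimpleGraph (Fin n)} [DecidableRel G.Adj]

lemma lam1_le_sqrt_of_sum_degree_le {B : ℝ}
    (hB : ∀ v, ∑ w ∈ G.neighborFinset v, (G.degree w : ℝ) ≤ B) : lam1 G ≤ √B :=
  Real.sSup_le (fun _ hμ ↦ Real.le_sqrt_of_sq_le <|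
    sq_le_of_hasEigenvalue_adjMatrix hB (by convert hμ)) (Real.sqrt_nonneg B)

lemma le_lam1_of_hasEigenvalue {μ : ℝ}
    (hμ : Module.End.HasEigenvalue (Matrix.toLin' (G.adjMatrix ℝ)) μ) : μ ≤ lam1 G :=
  le_csSup (Module.End.finite_hasEigenvalue _).bddAbove (by convert hμ)

theorem LocallySparse.lam1_le_sqrt {b : ℕ} (hG : LocallySparse G b) :
    lam1 G ≤ √((#(G.interedges univ univ) + b * n) / 2) := by
  refine lam1_le_sqrt_of_sum_degree_le fun v ↦ ?_
  have count := card_interedges_self_add_card_interedges_self G (subset_univ (G.neighborFinset v))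
  have sparse := hG v (G.neighborFinset v) fun u ↦ (G.mem_neighborFinset v u).1
  have hcard : b * #(G.neighborFinset v) ≤ b * n :=
    Nat.mul_le_mul_left b (card_finset_fin_le _)
  have hsum : #(G.interedges (G.neighborFinset v) univ) =
      ∑ w ∈ G.neighborFinset v, G.degree w := by
    simp only [card_interedges_eq_sum, ← SimpleGraph.card_neighborFinset_eq_degree,
      SimpleGraph.neighborFinset_eq_filter]
  have : 2 * ∑ w ∈ G.neighborFinset v, G.degree w ≤ #(G.interedges univ univ) + b * n := by lia
  rw [le_div_iff₀' two_pos]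
  exact_mod_cast this

lemma card_filter_val_mod_two_eq_zero (n : ℕ) : #{v : Fin n | v.val % 2 = 0} = (n + 1) / 2 := by
  rw [card_filter, Fin.sum_univ_eq_sum_range fun i ↦ if i % 2 = 0 then 1 else 0]
  induction n with
  | zero => simp
  | succ n ih => rw [sum_range_succ, ih]; split_ifs <;> lia

theorem sqrt_le_lam1_turanGraph_two (hn : 2 ≤ n) :
    √((n ^ 2 - 1) / 4) ≤ lam1 (SimpleGraph.turanGraph n 2) := by
  let A : Finset (Fin n) := {v | v.val % 2 = 0}
  have hA : #A = (n + 1) / 2 := card_filter_val_mod_two_eq_zero n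
  have hA' : #A + #Aᶜ = n := by rw [card_add_card_compl, Fintype.card_fin]
  refine le_trans (Real.sqrt_le_sqrt ?_) (le_lam1_of_hasEigenvalue
    (hasEigenvalue_adjMatrix_of_adj_iff (A := A) (card_pos.1 (by lia)) (card_pos.1 (by lia))
      fun u v ↦ ?_))
  · have : n ^ 2 ≤ 4 * (#A * #Aᶜ) + 1 := by
      have balanced : #A = #Aᶜ ∨ #A = #Aᶜ + 1 := by lia
      calc n ^ 2 = (#A + #Aᶜ) ^ 2 := by rw [hA']
        _ ≤ 4 * (#A * #Aᶜ) + 1 := by rcases balanced with h | h <;> rw [h] <;> lia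
    have : (n : ℝ) ^ 2 ≤ 4 * (#A * #Aᶜ) + 1 := by exact_mod_cast this
    linarith
  · simp only [SimpleGraph.turanGraph_adj, A, mem_filter, mem_univ, true_and]
    lia

lemma wheelFree_of_cliqueFree_three {t : ℕ} (ht : 3 ≤ t) {G : SimpleGraph (Fin n)}
    (hG : G.CliqueFree 3) : WheelFree t G := by
  rintro ⟨f, hf⟩
  exact hG _ (SimpleGraph.is3Clique_triple_iff.2
    ⟨hf ⟨0, by lia⟩ ⟨1, by lia⟩ (by simp [wheelGraph]),
      hf ⟨0, by lia⟩ ⟨2, by lia⟩ (by simp [wheelGraph]),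
      hf ⟨1, by lia⟩ ⟨2, by lia⟩ (by simp [wheelGraph])⟩)

end SpectralRadius

section LowDegree

variable {n b : ℕ} {G : SimpleGraph (Fin n)} [DecidableRel G.Adj]

lemma LocallySparse.sq_sub_one_le (hG : LocallySparse G b) (hn : 2 ≤ n)
    (hlam : lam1 (SimpleGraph.turanGraph n 2) ≤ lam1 G) :
    (n : ℝ) ^ 2 - 1 ≤ 2 * (#(G.interedges univ univ) + b * n) := by
  have := (sqrt_le_lam1_turanGraph_two hn).trans (hlam.trans hG.lam1_le_sqrt)
  rw [Real.sqrt_le_sqrt_iff (by positivity)] at this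
  linarith

lemma card_interedges_univ_le_of_degree_le {P : Finset (Fin n)} {d : ℝ}
    (hP : ∀ v ∈ P, G.degree v ≤ d) :
    (#(G.interedges univ univ) : ℝ) ≤ #(G.interedges Pᶜ Pᶜ) + 2 * (#P * d) := by
  have count := card_interedges_self_add_card_interedges_self G (subset_univ P)
  rw [← compl_eq_univ_sdiff] at count
  have hsum : (#(G.interedges P univ) : ℝ) ≤ #P * d := by
    rw [card_interedges_eq_sum, Nat.cast_sum, ← nsmul_eq_mul]
    refine sum_le_card_nsmul _ _ _ fun v hv ↦ ?_
    rw [← G.neighborFinset_eq_filter, G.card_neighborFinset_eq_degree]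
    exact hP v hv
  have : #(G.interedges univ univ) ≤ #(G.interedges Pᶜ Pᶜ) + 2 * #(G.interedges P univ) :=
    (Nat.le_add_right _ _).trans count.le
  have : (#(G.interedges univ univ) : ℝ) ≤
      #(G.interedges Pᶜ Pᶜ) + 2 * #(G.interedges P univ) := by exact_mod_cast this
  linarith

theorem LocallySparse.four_mul_card_mul_le (hG : LocallySparse G b) (hn : 2 ≤ n)
    (hlam : lam1 (SimpleGraph.turanGraph n 2) ≤ lam1 G) {P : Finset (Fin n)} {c : ℝ}
    (hP : ∀ v ∈ P, G.degree v ≤ n / 2 - c) : 4 * (#P * c) ≤ 4 * b * n + #P ^ 2 + 1 := by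
  have many_edges := hG.sq_sub_one_le hn hlam
  have few_at_P := card_interedges_univ_le_of_degree_le hP
  have few_off_P : (2 : ℝ) * #(G.interedges Pᶜ Pᶜ) ≤ 2 * b * #Pᶜ + #Pᶜ ^ 2 := by
    exact_mod_cast hG.two_mul_card_interedges_le Pᶜ
  have hcard : (#Pᶜ : ℝ) = n - #P := by
    rw [eq_sub_iff_add_eq']
    exact_mod_cast (card_add_card_compl P).trans (Fintype.card_fin n)
  rw [hcard] at few_off_P
  have : (0 : ℝ) ≤ b * #P := by positivity
  nlinarith

/-- The inequality of `LocallySparse.four_mul_card_mul_le` leaves a gap of forbidden sizes just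
above `R`; since it also holds for subsets of `P`, no larger size is possible either. -/
theorem LocallySparse.card_le_of_degree_le (hG : LocallySparse G b) (hn : 2 ≤ n)
    (hlam : lam1 (SimpleGraph.turanGraph n 2) ≤ lam1 G) {P : Finset (Fin n)} {c R : ℝ}
    (hP : ∀ v ∈ P, G.degree v ≤ n / 2 - c) (hR : 0 ≤ R) (hRc : R + 1 ≤ c)
    (hb : 4 * b * n + 1 ≤ 3 * (R * c)) : #P ≤ R := by
  by_contra! hlt
  obtain ⟨Q, hQP, hQ⟩ := exists_subset_card_eq (Nat.floor_lt hR |>.2 hlt : ⌊R⌋₊ + 1 ≤ #P)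
  have key := hG.four_mul_card_mul_le hn hlam fun v hv ↦ hP v (hQP hv)
  rw [hQ, Nat.cast_add_one] at key
  have floor_le := Nat.floor_le hR
  have lt_floor := Nat.lt_floor_add_one R
  nlinarith

end LowDegree

section Asymptotics

open Filter

lemma eventually_le_natCast_rpow {s : ℝ} (hs : 0 < s) (M : ℝ) :
    ∀ᶠ n : ℕ in atTop, M ≤ (n : ℝ) ^ s :=
  ((tendsto_rpow_atTop hs).comp tendsto_natCast_atTop_atTop).eventually_ge_atTop M

lemma exists_lt_pow_and_le_add_one {k n : ℕ} (hk : k ≠ 0) {ν : ℝ} (hν : 0 ≤ ν)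
    (hpow : ν ^ k = n) : ∃ q : ℕ, n < q ^ k ∧ q ≤ ν + 1 := by
  refine ⟨⌊ν⌋₊ + 1, ?_, by simpa using Nat.floor_le hν⟩
  have : ν ^ k < (⌊ν⌋₊ + 1 : ℝ) ^ k := pow_lt_pow_left₀ (Nat.lt_floor_add_one ν) hν hk
  rw [hpow] at this
  exact_mod_cast this

theorem few_low_degree_vertices_general (k : ℕ) (p : ℝ) (hk : 2 ≤ k) (hp : 0 < p) :
    ∀ᶠ n : ℕ in atTop, ∀ G : SimpleGraph (Fin n), WheelFree (2 * k + 1) G →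
      lam1 (SimpleGraph.turanGraph n 2) ≤ lam1 G →
      ({v : Fin n | (deg G v : ℝ) ≤ (1 / 2 - 1 / p) * n}.ncard : ℝ) ≤
        16 * p * k * (n : ℝ) ^ (1 / k : ℝ) := by
  classical
  filter_upwards [eventually_le_natCast_rpow (by positivity : (0 : ℝ) < 1 / k)
    (max 9 (16 * p ^ 2 * k + p)), eventually_ge_atTop 2] with n hroot hn G hG hlam
  set ν : ℝ := (n : ℝ) ^ (1 / k : ℝ)
  obtain ⟨hν, hνp⟩ := max_le_iff.1 hroot
  have hpow : ν ^ k = n := by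
    rw [← Real.rpow_natCast, ← Real.rpow_mul n.cast_nonneg, one_div_mul_cancel (by positivity),
      Real.rpow_one]
  have hsq : ν ^ 2 ≤ n := hpow ▸ pow_le_pow_right₀ (by linarith) hk
  obtain ⟨q, hnq, hq⟩ := exists_lt_pow_and_le_add_one (by lia) (by linarith) hpow
  have gap : 16 * p * k * ν + 1 ≤ n / p := by
    rw [le_div_iff₀ hp]
    nlinarith
  have sparse : 4 * (8 * k * (q + 3) : ℕ) * (n : ℝ) + 1 ≤ 3 * (16 * p * k * ν * (n / p)) := by
    have hkn : (1 : ℝ) ≤ k * n := by exact_mod_cast Nat.mul_pos (by lia : 0 < k) (by lia : 0 < n)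
    calc 4 * (8 * k * (q + 3) : ℕ) * (n : ℝ) + 1 = 32 * (k * n) * (q + 3) + 1 := by
          push_cast; ring
      _ ≤ 32 * (k * n) * (ν + 1 + 3) + 1 := by gcongr
      _ ≤ 48 * (k * n) * ν := by nlinarith
      _ = 3 * (16 * p * k * ν * (n / p)) := by field_simp; ring
  rw [Set.ncard_eq_toFinset_card']
  refine (hG.locallySparse hnq).card_le_of_degree_le hn hlam (fun v hv ↦ ?_) (by positivity) gap
    sparse
  calc (G.degree v : ℝ) ≤ (1 / 2 - 1 / p) * n := by simpa [deg] using hv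
    _ = n / 2 - n / p := by ring

end Asymptotics

/-- The set `P` of vertices of degree at most `(1/2 - 1/p)n`
satisfies `|P| ≤ 16 p k n^{1/k}`. -/
theorem few_low_degree_vertices (k p : ℕ) (hk : 2 ≤ k) (hp : 0 < p) :
    ∃ N : ℕ, ∀ n : ℕ, N ≤ n → ∀ G : SimpleGraph (Fin n), IsSpexWheel (2 * k + 1) G →
      (({v : Fin n | (deg G v : ℝ) ≤ (1 / 2 - 1 / (p : ℝ)) * (n : ℝ)}.ncard : ℝ))
        ≤ 16 * (p : ℝ) * (k : ℝ) * (n : ℝ) ^ ((1 : ℝ) / (k : ℝ)) := by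
  obtain ⟨N, hN⟩ := Filter.eventually_atTop.1
    (few_low_degree_vertices_general k p hk (Nat.cast_pos.2 hp))
  refine ⟨N, fun n hn G hG ↦ hN n hn G hG.1 (hG.2 _ ?_)⟩
  exact wheelFree_of_cliqueFree_three (by lia) (SimpleGraph.turanGraph_cliqueFree two_pos)
end

section
/- Let k ≥ 2 be an integer. There is an integer p₀ such that for every integer p ≥ p₀ and all sufficiently large n (depending on k and p), if G is an n-vertex W_{2k+1}-free simple graph attaining the maximum spectral radius among all n-vertex W_{2k+1}-free graphs and V(G) = S ⊔ T is a maximum cut of G, then every vertex v of G has degree d(v) > (1/2 − 1/p)n, and the induced subgraphs G[S] and G[T] contain no copy of the star K_{1,k}; in particular every vertex u ∈ S satisfies d_S(u) ≤ k−1 and every vertex u ∈ T satisfies d_T(u) ≤ k−1. -/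
/-!
The odd wheel `W_{2k+1}` is `3`-colourable with colour classes of sizes `1, k, k`, so it embeds
as soon as a vertex is joined to both sides of a `K_{k,k}`. Hence the neighbourhoods of a
`W_{2k+1}`-free graph contain no `K_{k,k}` and span `o(n²)` edges (Kővári–Sós–Turán).

In a spectral extremal graph, `λ₁ ≥ (n - 1) / 2` by comparison with the balanced complete bipartite
graph. Counting the walks of length two from a vertex `z` where the Perron vector `y` is largest
bounds `λ₁²` by the `o(n²)` edges inside `N(z)` plus the edges between `N(z)` and its complement, so
a maximum cut has at least `n² / 4 - t²` edges with `t = o(n)`. All but `t` vertices of each side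
then miss at most `t` vertices of the other side; call them typical.

Let `z ∈ S`. Reconnecting any vertex `v` to the typical vertices of `T` creates no wheel, because in
a copy of one `v` could be exchanged for a common neighbour in `S` of the typical vertices involved.
By extremality the `y`-weight of `N(v)` is at least that of these vertices, which is at least
`λ₁ - o(n)` by the eigenvector equation at `z`; hence `d(v) ≥ n / 2 - o(n)`. Consequently every
vertex misses only `o(n)` vertices of the other side, and a vertex of `S` with `k` neighbours in `S`
would have, together with them, `k` common neighbours in `T`, forming a wheel.
-/

section Development

open Finset SimpleGraph Matrix

universe u

variable {V : Type*}

/-! ### Copies of wheels -/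

theorem containsCopy_iff_isContained {α β : Type*} {F : SimpleGraph α} {G : SimpleGraph β} :
    ContainsCopy F G ↔ F ⊑ G :=
  ⟨fun ⟨f, hf⟩ ↦ ⟨⟨f, hf _ _⟩, f.injective⟩,
    fun ⟨f⟩ ↦ ⟨f.toEmbedding, fun _ _ h ↦ f.toHom.map_adj h⟩⟩

theorem wheelFree_iff_free {t n : ℕ} {G : SimpleGraph (Fin n)} :
    WheelFree t G ↔ (wheelGraph t).Free G :=
  containsCopy_iff_isContained.not

theorem isContained_of_coloring {α ι : Type*} [Fintype α] [DecidableEq ι] {F : SimpleGraph α}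
    {G : SimpleGraph V} (C : F.Coloring ι) (P : ι → Finset V)
    (hjoin : ∀ i j, i ≠ j → ∀ u ∈ P i, ∀ w ∈ P j, G.Adj u w)
    (hcard : ∀ i, #{a | C a = i} ≤ #(P i)) : F ⊑ G := by
  have hemb (i : ι) : Nonempty ({a // C a = i} ↪ P i) :=
    Function.Embedding.nonempty_of_card_le (by simpa [Fintype.card_subtype] using hcard i)
  let f (a : α) : V := (hemb (C a)).some ⟨a, rfl⟩
  have hf {a : α} {i : ι} (ha : C a = i) : f a = (hemb i).some ⟨a, ha⟩ := by subst ha; rfl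
  have hadj {a b : α} (hab : C a ≠ C b) : G.Adj (f a) (f b) :=
    hjoin _ _ hab _ (Subtype.prop _) _ (Subtype.prop _)
  refine ⟨⟨f, fun hab ↦ hadj (C.valid hab)⟩, fun a b (hab : f a = f b) ↦ ?_⟩
  by_cases hC : C a = C b
  · rw [hf hC, hf rfl, Subtype.coe_inj, (hemb _).some.apply_eq_iff_eq] at hab
    exact congrArg Subtype.val hab
  · exact ((hadj hC).ne hab).elim

/-- The colouring of the wheel with an even rim by three colours: one for the hub and two
alternating along the rim. -/
def wheelColoring (k : ℕ) : (wheelGraph (2 * k + 1)).Coloring (Fin 3) :=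
  Coloring.mk (fun a ↦ if a.val = 0 then 0 else if a.val % 2 = 1 then 1 else 2) <| by
    rintro ⟨a, ha⟩ ⟨b, hb⟩ ⟨hne, h⟩
    simp only [ne_eq, Fin.mk.injEq] at hne h ⊢
    split_ifs <;> first | decide | omega

theorem card_wheelColoring_le (k : ℕ) (i : Fin 3) :
    #{a | wheelColoring k a = i} ≤ ![1, k, k] i := by
  have hval (a) : wheelColoring k a = if a.val = 0 then 0 else if a.val % 2 = 1 then 1 else 2 := rfl
  rw [← card_range (![1, k, k] i)]
  refine card_le_card_of_injOn (fun a ↦ (a.val - 1) / 2) (fun a ha ↦ ?_)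
    fun a ha b hb (hab : (a.val - 1) / 2 = (b.val - 1) / 2) ↦ ?_
  · rw [coe_filter_univ, Set.mem_ofPred_eq, hval] at ha
    rw [mem_coe, mem_range]
    split_ifs at ha <;> subst ha <;> simp <;> omega
  · rw [coe_filter_univ, Set.mem_ofPred_eq, hval] at ha hb
    rw [Fin.ext_iff]
    split_ifs at ha hb <;> omega

theorem wheelGraph_isContained_of_hub {G : SimpleGraph V} {k : ℕ} {u : V} {P Q : Finset V}
    (hP : k ≤ #P) (hQ : k ≤ #Q) (huP : ∀ p ∈ P, G.Adj u p) (huQ : ∀ q ∈ Q, G.Adj u q)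
    (hPQ : ∀ p ∈ P, ∀ q ∈ Q, G.Adj p q) : wheelGraph (2 * k + 1) ⊑ G := by
  refine isContained_of_coloring (wheelColoring k) ![{u}, P, Q] ?_ fun i ↦
    (card_wheelColoring_le k i).trans ?_
  · have hPu p hp := (huP p hp).symm
    have hQu q hq := (huQ q hq).symm
    have hQP q hq p hp := (hPQ p hp q hq).symm
    simp_all [Fin.forall_fin_succ]
  · fin_cases i <;> simp [hP, hQ]

theorem not_cliqueFree_three_wheelGraph {k : ℕ} (hk : 0 < k) :
    ¬ (wheelGraph (2 * k + 1)).CliqueFree 3 := by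
  refine fun h ↦ h {⟨0, by omega⟩, ⟨1, by omega⟩, ⟨2, by omega⟩} ?_
  simp [is3Clique_triple_iff, wheelGraph]

theorem free_of_replaceable {α : Type*} [Fintype α] {F : SimpleGraph α} {G H : SimpleGraph V}
    {v : V} (hoff : ∀ u ≠ v, ∀ w ≠ v, H.Adj u w → G.Adj u w)
    (hrep : ∀ I : Finset V, #I = Fintype.card α → ∃ s ∉ I, ∀ w ∈ I, H.Adj w v → G.Adj w s)
    (hF : F.Free G) : F.Free H := by
  classical
  rintro ⟨f⟩
  obtain ⟨s, hs, hadj⟩ := hrep (univ.image f) (card_image_of_injective _ f.injective)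
  have hmem (a : α) : f a ∈ univ.image f := mem_image_of_mem _ (mem_univ a)
  have hfs (a : α) : f a ≠ s := ne_of_mem_of_not_mem (hmem a) hs
  have hswap (a : α) : Equiv.swap v s (f a) = if f a = v then s else f a := by
    simp [Equiv.swap_apply_def, hfs a]
  -- A copy of `F` through `v` becomes a copy in `G` after swapping `v` with the spare vertex `s`.
  refine hF ⟨⟨fun a ↦ Equiv.swap v s (f a), fun {a b} hab ↦ ?_⟩,
    (Equiv.swap v s).injective.comp f.injective⟩
  have hH : H.Adj (f a) (f b) := f.toHom.map_adj hab
  rw [hswap, hswap]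
  split_ifs with ha hb hb
  · exact (hH.ne (ha.trans hb.symm)).elim
  · exact (hadj _ (hmem b) (ha ▸ hH).symm).symm
  · exact hadj _ (hmem a) (hb ▸ hH)
  · exact hoff _ ha _ hb hH

/-! ### The largest eigenvalue -/

variable [Fintype V]

theorem dotProduct_mulVec_le_sSup_spectrum [DecidableEq V] {A : Matrix V V ℝ}
    (hA : A.IsHermitian) (y : V → ℝ) :
    y ⬝ᵥ A *ᵥ y ≤ sSup (spectrum ℝ A) * (y ⬝ᵥ y) := by
  open scoped MatrixOrder in
  have hle : A ≤ algebraMap ℝ _ (sSup (spectrum ℝ A)) :=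
    (le_algebraMap_iff_spectrum_le hA).2 fun _ hx ↦ le_csSup A.finite_real_spectrum.bddAbove hx
  have := (Matrix.le_iff.1 hle).dotProduct_mulVec_nonneg y
  simpa [sub_mulVec, Algebra.algebraMap_eq_smul_one, smul_mulVec] using this

theorem exists_mulVec_eq_sSup_spectrum_smul [DecidableEq V] [Nonempty V] {A : Matrix V V ℝ}
    (hA : A.IsHermitian) : ∃ x ≠ 0, A *ᵥ x = sSup (spectrum ℝ A) • x := by
  have hne : (spectrum ℝ A).Nonempty :=
    ⟨_, hA.eigenvalues_mem_spectrum_real (Classical.arbitrary V)⟩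
  have hmem := hne.csSup_mem A.finite_real_spectrum
  rw [← spectrum_toLin', ← Module.End.hasEigenvalue_iff_mem_spectrum] at hmem
  obtain ⟨x, hx⟩ := hmem.exists_hasEigenvector
  exact ⟨x, hx.2, by simpa using hx.apply_eq_smul⟩

/-- The spectral radius `λ₁(G)`, as the supremum of the real spectrum of the adjacency matrix. -/
noncomputable def adjRadius (G : SimpleGraph V) : ℝ := by
  classical
  exact sSup (spectrum ℝ (G.adjMatrix ℝ))

theorem adjRadius_eq_sSup_spectrum [DecidableEq V] (G : SimpleGraph V) [DecidableRel G.Adj] :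
    adjRadius G = sSup (spectrum ℝ (G.adjMatrix ℝ)) := by
  unfold adjRadius
  congr!

theorem lam1_eq_adjRadius {n : ℕ} (G : SimpleGraph (Fin n)) : lam1 G = adjRadius G := by
  classical
  simp only [lam1, adjRadius_eq_sSup_spectrum, Module.End.hasEigenvalue_iff_mem_spectrum,
    spectrum_toLin', Set.ofPred_mem_eq]

theorem dotProduct_adjMatrix_mulVec_le (G : SimpleGraph V) [DecidableRel G.Adj] (y : V → ℝ) :
    y ⬝ᵥ G.adjMatrix ℝ *ᵥ y ≤ adjRadius G * (y ⬝ᵥ y) := by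
  classical
  rw [adjRadius_eq_sSup_spectrum]
  exact dotProduct_mulVec_le_sSup_spectrum (isHermitian_iff_isSymm.2 G.isSymm_adjMatrix) y

theorem two_mul_card_edgeFinset_le_adjRadius_mul_card (G : SimpleGraph V) [DecidableRel G.Adj] :
    2 * (#G.edgeFinset : ℝ) ≤ adjRadius G * Fintype.card V := by
  have h := dotProduct_adjMatrix_mulVec_le G (Function.const V 1)
  simpa [dotProduct, ← Nat.cast_sum, sum_degrees_eq_twice_card_edges] using h

theorem adjRadius_nonneg (G : SimpleGraph V) : 0 ≤ adjRadius G := by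
  classical
  rcases isEmpty_or_nonempty V with _ | _
  · simp [adjRadius_eq_sSup_spectrum, spectrum.of_subsingleton]
  · refine nonneg_of_mul_nonneg_left ?_ (Nat.cast_pos.2 (Fintype.card_pos (α := V)))
    exact (by positivity : (0 : ℝ) ≤ _).trans (two_mul_card_edgeFinset_le_adjRadius_mul_card G)

section

variable (G : SimpleGraph V) [DecidableRel G.Adj]

/-- A weighting `y` with values in `[0, 1]`, equal to `1` at the vertex `z`, and satisfying
`λ₁(G) y ≤ A(G) y` entrywise: what remains of an eigenvector for `λ₁(G)` after taking absolute
values and normalising. -/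
structure IsPeakedSubeigenvector (y : V → ℝ) (z : V) : Prop where
  nonneg : ∀ v, 0 ≤ y v
  le_one : ∀ v, y v ≤ 1
  apply_peak : y z = 1
  adjRadius_mul_le : ∀ v, adjRadius G * y v ≤ ∑ w ∈ G.neighborFinset v, y w

theorem exists_isPeakedSubeigenvector [Nonempty V] :
    ∃ y z, IsPeakedSubeigenvector G y z := by
  classical
  obtain ⟨x, hx0, hx⟩ :=
    exists_mulVec_eq_sSup_spectrum_smul (isHermitian_iff_isSymm.2 (G.isSymm_adjMatrix (α := ℝ)))
  obtain ⟨z, hz⟩ := Finite.exists_max fun v ↦ |x v|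
  obtain ⟨v, hv⟩ := Function.ne_iff.1 hx0
  have hpos : 0 < |x z| := (abs_pos.2 hv).trans_le (hz v)
  refine ⟨fun v ↦ |x v| / |x z|, z, fun v ↦ by positivity, fun v ↦ (div_le_one hpos).2 (hz v),
    div_self hpos.ne', fun v ↦ ?_⟩
  have hxv : adjRadius G * x v = ∑ w ∈ G.neighborFinset v, x w := by
    simpa [adjRadius_eq_sSup_spectrum] using (congr_fun hx v).symm
  rw [← mul_div_assoc, ← sum_div]
  refine div_le_div_of_nonneg_right ?_ hpos.le
  rw [← abs_of_nonneg (adjRadius_nonneg G), ← abs_mul, hxv]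
  exact abs_sum_le_sum_abs _ _

theorem dotProduct_adjMatrix_mulVec_update [DecidableEq V] (y : V → ℝ) (v : V) (t : ℝ) :
    Function.update y v t ⬝ᵥ G.adjMatrix ℝ *ᵥ Function.update y v t =
      Function.update y v 0 ⬝ᵥ G.adjMatrix ℝ *ᵥ Function.update y v 0 +
        2 * t * ∑ w ∈ G.neighborFinset v, y w := by
  have hupd : Function.update y v t = Function.update y v 0 + Pi.single v t := by
    ext w
    rcases eq_or_ne w v with rfl | hw <;> simp [*]
  have hv : (G.adjMatrix ℝ *ᵥ Function.update y v 0) v = ∑ w ∈ G.neighborFinset v, y w := by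
    rw [adjMatrix_mulVec_apply]
    exact sum_congr rfl fun w hw ↦
      Function.update_of_ne ((G.mem_neighborFinset v w).1 hw).ne' _ _
  have hcross : Function.update y v 0 ⬝ᵥ G.adjMatrix ℝ *ᵥ Pi.single v t =
      (G.adjMatrix ℝ *ᵥ Function.update y v 0) v * t := by
    rw [dotProduct_mulVec, ← mulVec_transpose, transpose_adjMatrix, dotProduct_single]
  have hdiag : (G.adjMatrix ℝ *ᵥ Pi.single v t) v = 0 := by simp
  rw [hupd, mulVec_add, add_dotProduct, dotProduct_add, dotProduct_add, hcross,
    single_dotProduct, single_dotProduct, hdiag, hv]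
  ring

omit [DecidableRel G.Adj] in
theorem dotProduct_update_self [DecidableEq V] (y : V → ℝ) (v : V) (t : ℝ) :
    Function.update y v t ⬝ᵥ Function.update y v t =
      Function.update y v 0 ⬝ᵥ Function.update y v 0 + t ^ 2 := by
  simp only [dotProduct, ← add_sum_erase _ _ (mem_univ v), Function.update_self]
  have herase : ∀ s, ∑ w ∈ univ.erase v, Function.update y v s w * Function.update y v s w =
      ∑ w ∈ univ.erase v, y w * y w := fun s ↦ sum_congr rfl fun w hw ↦ by
    rw [Function.update_of_ne (ne_of_mem_erase hw)]
  rw [herase, herase]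
  ring

variable {G} {H : SimpleGraph V} [DecidableRel H.Adj]

theorem dotProduct_adjMatrix_mulVec_congr_off {v : V} {x : V → ℝ} (hxv : x v = 0)
    (hoff : ∀ u ≠ v, ∀ w ≠ v, (G.Adj u w ↔ H.Adj u w)) :
    x ⬝ᵥ G.adjMatrix ℝ *ᵥ x = x ⬝ᵥ H.adjMatrix ℝ *ᵥ x := by
  simp only [dotProduct_mulVec_adjMatrix]
  refine sum_congr rfl fun u _ ↦ sum_congr rfl fun w _ ↦ ?_
  by_cases hu : u = v
  · simp [hu, hxv]
  by_cases hw : w = v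
  · simp [hw, hxv]
  simp only [hoff u hu w hw]

theorem adjRadius_lt_of_sum_neighborFinset_lt {v : V} {y : V → ℝ} (hy : ∀ u, 0 ≤ y u)
    (hsub : ∀ u, adjRadius G * y u ≤ ∑ w ∈ G.neighborFinset u, y w)
    (hoff : ∀ u ≠ v, ∀ w ≠ v, (G.Adj u w ↔ H.Adj u w))
    (hlt : ∑ w ∈ G.neighborFinset v, y w < ∑ w ∈ H.neighborFinset v, y w) :
    adjRadius G < adjRadius H := by
  classical
  by_contra! hle
  set a := ∑ w ∈ G.neighborFinset v, y w
  set b := ∑ w ∈ H.neighborFinset v, y w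
  set μ := adjRadius G
  have hμ : 0 ≤ μ := adjRadius_nonneg G
  have hform : μ * (y ⬝ᵥ y) ≤ y ⬝ᵥ G.adjMatrix ℝ *ᵥ y := by
    rw [dotProduct, dotProduct, mul_sum]
    refine sum_le_sum fun u _ ↦ ?_
    rw [adjMatrix_mulVec_apply]
    linarith [mul_le_mul_of_nonneg_left (hsub u) (hy u)]
  have hyG := dotProduct_adjMatrix_mulVec_update G y v (y v)
  have hyy := dotProduct_update_self y v (y v)
  rw [Function.update_eq_self] at hyG hyy
  rw [hyG, hyy, dotProduct_adjMatrix_mulVec_congr_off (Function.update_self ..) hoff] at hform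
  -- Raising the entry of `y` at `v` by `d` gains `2 (b - a) d` in the quadratic form of `H`, which
  -- exceeds the increase `μ d ^ 2` of `μ (y ⬝ᵥ y)` that the subeigenvector inequality leaves over.
  set d := (b - a) / (μ + 1) with hd
  have hd0 : 0 < d := by have := sub_pos.2 hlt; positivity
  have hdμ : μ * d + d = b - a := by rw [hd]; field_simp
  have htest := (dotProduct_adjMatrix_mulVec_le H (Function.update y v (y v + d))).trans
    (mul_le_mul_of_nonneg_right hle (sum_nonneg fun _ _ ↦ mul_self_nonneg _))
  rw [dotProduct_adjMatrix_mulVec_update, dotProduct_update_self] at htest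
  have hgain : 2 * (b - a) * d ≤ μ * d * d := by
    nlinarith [mul_nonneg (hy v) (sub_pos.2 hlt).le, mul_le_mul_of_nonneg_right (hsub v) hd0.le]
  nlinarith [le_of_mul_le_mul_right hgain hd0]

end

/-! ### Counting edges -/

theorem sum_le_card_filter_mul_add {ι R : Type*} [Semiring R] [LinearOrder R] [IsOrderedRing R]
    (s : Finset ι) {f : ι → R} {b c : R} (hb : ∀ i ∈ s, f i ≤ b) (hc : 0 ≤ c) :
    ∑ i ∈ s, f i ≤ #{i ∈ s | c ≤ f i} * b + #s * c := by
  rw [← sum_filter_add_sum_filter_not s (c ≤ f ·)]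
  refine add_le_add ?_ ?_
  · simpa using sum_le_card_nsmul _ _ _ fun i hi ↦ hb i (mem_of_mem_filter i hi)
  · calc ∑ i ∈ s with ¬ c ≤ f i, f i ≤ #{i ∈ s | ¬ c ≤ f i} * c := by
          simpa using sum_le_card_nsmul {i ∈ s | ¬ c ≤ f i} f c fun i hi ↦
            (not_le.1 (mem_filter.1 hi).2).le
      _ ≤ #s * c := by gcongr; exact filter_subset _ _

variable [DecidableEq V] {G : SimpleGraph V} [DecidableRel G.Adj]

theorem card_inter_add_card_compl_inter (G : SimpleGraph V) [DecidableRel G.Adj] (S : Finset V)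
    (v : V) : #(S ∩ G.neighborFinset v) + #(Sᶜ ∩ G.neighborFinset v) = G.degree v := by
  rw [← card_union_of_disjoint (disjoint_compl_right.mono inter_subset_left inter_subset_left),
    ← union_inter_distrib_right, union_compl, univ_inter, card_neighborFinset_eq_degree]

theorem card_interedges_eq_sum_s7 (G : SimpleGraph V) [DecidableRel G.Adj] (A B : Finset V) :
    #(G.interedges A B) = ∑ u ∈ A, #(B ∩ G.neighborFinset u) := by
  simp only [SimpleGraph.interedges, Rel.interedges, card_filter, sum_product,
    ← filter_mem_eq_inter, mem_neighborFinset]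

omit [Fintype V] [DecidableEq V] in
theorem card_interedges_symm (G : SimpleGraph V) [DecidableRel G.Adj] (A B : Finset V) :
    #(G.interedges A B) = #(G.interedges B A) :=
  have := G.symm
  Rel.card_interedges_comm A B

theorem exists_subset_card_sub_mul_le_adj {P B : Finset V} {m : ℝ}
    (h : ∀ p ∈ P, #(B \ G.neighborFinset p) ≤ m) :
    ∃ Q ⊆ B, #B - #P * m ≤ #Q ∧ ∀ p ∈ P, ∀ q ∈ Q, G.Adj p q := by
  refine ⟨B \ P.biUnion fun p ↦ B \ G.neighborFinset p, sdiff_subset, ?_, fun p hp q hq ↦ ?_⟩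
  · have hmiss : (#(P.biUnion fun p ↦ B \ G.neighborFinset p) : ℝ) ≤ #P * m := by
      refine (Nat.cast_le.2 card_biUnion_le).trans ?_
      simpa using sum_le_card_nsmul _ _ _ h
    rw [sub_le_iff_le_add]
    exact (mod_cast card_le_card_sdiff_add_card : (#B : ℝ) ≤ _ + _).trans
      (add_le_add_right hmiss _)
  · simp only [mem_sdiff, mem_biUnion, mem_neighborFinset, not_exists, not_and, not_not] at hq
    exact hq.2 p hp hq.1

theorem exists_complete_pair_of_lt_sum {P A : Finset V} {k : ℕ}
    (h : 2 ^ #P * k * #P + #A * k < ∑ u ∈ P, #(A ∩ G.neighborFinset u)) :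
    ∃ R ⊆ P, ∃ F ⊆ A, k ≤ #R ∧ k ≤ #F ∧ ∀ r ∈ R, ∀ f ∈ F, G.Adj r f := by
  set A' := {a ∈ A | k ≤ #(P ∩ G.neighborFinset a)} with hA'
  have hlarge : 2 ^ #P * k < #A' := by
    rw [← card_interedges_eq_sum_s7, card_interedges_symm, card_interedges_eq_sum_s7] at h
    have := sum_le_card_filter_mul_add A (f := fun a ↦ #(P ∩ G.neighborFinset a))
      (fun a _ ↦ card_le_card inter_subset_left) k.zero_le
    simp only [Nat.cast_id] at this
    exact lt_of_mul_lt_mul_right (by lia) (#P).zero_le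
  have hmaps : ∀ a ∈ A', P ∩ G.neighborFinset a ∈ P.powerset := fun a _ ↦
    mem_powerset.2 inter_subset_left
  obtain ⟨R, hR, hfib⟩ :=
    exists_lt_card_fiber_of_mul_lt_card_of_maps_to hmaps (by rwa [card_powerset])
  obtain ⟨a, ha⟩ := card_pos.1 (k.zero_le.trans_lt hfib)
  obtain ⟨haA', rfl⟩ := mem_filter.1 ha
  refine ⟨_, mem_powerset.1 hR, _, fun b hb ↦ (mem_filter.1 (mem_filter.1 hb).1).1,
    (mem_filter.1 haA').2, hfib.le, fun r hr b hb ↦ ?_⟩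
  rw [← (mem_filter.1 hb).2] at hr
  exact ((G.mem_neighborFinset _ _).1 (mem_inter.1 hr).2).symm

/-! ### Neighbourhoods in wheel-free graphs -/

theorem exists_complete_pair_of_mul_sq_lt_sum {A : Finset V} {k m : ℕ} {ε : ℝ}
    (hm : 2 * (k + 1) ≤ ε * m) (hmn : 2 * m ≤ ε * Fintype.card V)
    (hn : 2 ^ m * k * m < Fintype.card V)
    (h : ε * Fintype.card V ^ 2 < ∑ u ∈ A, (#(A ∩ G.neighborFinset u) : ℝ)) :
    ∃ R ⊆ A, ∃ F ⊆ A, k ≤ #R ∧ k ≤ #F ∧ ∀ r ∈ R, ∀ f ∈ F, G.Adj r f := by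
  set n := Fintype.card V
  have hn0 : (0 : ℝ) < n := Nat.cast_pos.2 (Nat.zero_lt_of_lt hn)
  have hcount : (m : ℝ) ≤ #{u ∈ A | ε * n / 2 ≤ (#(A ∩ G.neighborFinset u) : ℝ)} := by
    have hsum := sum_le_card_filter_mul_add A (f := fun u ↦ (#(A ∩ G.neighborFinset u) : ℝ))
      (fun u _ ↦ Nat.cast_le.2 (card_le_univ _)) (c := ε * n / 2) (by linarith)
    have hA : #A * (ε * n / 2) ≤ n * (ε * n / 2) :=
      mul_le_mul_of_nonneg_right (Nat.cast_le.2 (card_le_univ A)) (by linarith)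
    exact le_of_mul_le_mul_right (by nlinarith) hn0
  obtain ⟨P, hPsub, hPcard⟩ := exists_subset_card_eq (Nat.cast_le.1 hcount)
  obtain ⟨R, hR, F, hF, hRF⟩ : ∃ R ⊆ P, ∃ F ⊆ A, k ≤ #R ∧ k ≤ #F ∧
      ∀ r ∈ R, ∀ f ∈ F, G.Adj r f := by
    refine exists_complete_pair_of_lt_sum ?_
    have hlow : m * (ε * n / 2) ≤ ∑ u ∈ P, (#(A ∩ G.neighborFinset u) : ℝ) := by
      rw [← hPcard, ← nsmul_eq_mul]
      exact card_nsmul_le_sum _ _ _ fun u hu ↦ (mem_filter.1 (hPsub hu)).2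
    have hA : (#A * k : ℝ) ≤ n * k := by gcongr; exact card_le_univ A
    rw [hPcard, ← Nat.cast_lt (α := ℝ)]
    push_cast
    have hn' : (2 ^ m * k * m : ℝ) < n := mod_cast hn
    nlinarith
  exact ⟨R, hR.trans (hPsub.trans (filter_subset _ _)), F, hF, hRF⟩

theorem sum_card_inter_neighborFinset_le_of_free {k m : ℕ} {ε : ℝ}
    (hG : (wheelGraph (2 * k + 1)).Free G) (hm : 2 * (k + 1) ≤ ε * m)
    (hmn : 2 * m ≤ ε * Fintype.card V) (hn : 2 ^ m * k * m < Fintype.card V) (z : V) :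
    ∑ u ∈ G.neighborFinset z, (#(G.neighborFinset z ∩ G.neighborFinset u) : ℝ) ≤
      ε * Fintype.card V ^ 2 := by
  by_contra! h
  obtain ⟨R, hR, F, hF, hkR, hkF, hRF⟩ := exists_complete_pair_of_mul_sq_lt_sum hm hmn hn h
  exact hG (wheelGraph_isContained_of_hub hkR hkF
    (fun r hr ↦ (G.mem_neighborFinset z r).1 (hR hr))
    (fun f hf ↦ (G.mem_neighborFinset z f).1 (hF hf)) hRF)

theorem exists_forall_sum_card_inter_neighborFinset_le (k : ℕ) {ε : ℝ} (hε : 0 < ε) :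
    ∃ N : ℕ, ∀ (V : Type u) [Fintype V] [DecidableEq V] (G : SimpleGraph V) [DecidableRel G.Adj],
      N ≤ Fintype.card V → (wheelGraph (2 * k + 1)).Free G → ∀ z,
      ∑ u ∈ G.neighborFinset z, (#(G.neighborFinset z ∩ G.neighborFinset u) : ℝ) ≤
        ε * Fintype.card V ^ 2 := by
  obtain ⟨m, hm⟩ := exists_nat_ge (2 * (k + 1) / ε)
  obtain ⟨N, hN⟩ := exists_nat_ge (2 * m / ε)
  refine ⟨max N (2 ^ m * k * m + 1), fun V _ _ G _ hV hG z ↦ ?_⟩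
  obtain ⟨hNV, hmV⟩ := max_le_iff.1 hV
  refine sum_card_inter_neighborFinset_le_of_free hG ?_ ?_ hmV z
  · rwa [← div_le_iff₀' hε]
  · rw [← div_le_iff₀' hε]
    exact hN.trans (mod_cast hNV)

/-- The right-hand side counts the walks of length two from the peak, according to whether the
second step stays in the neighbourhood of the peak. -/
theorem IsPeakedSubeigenvector.sq_adjRadius_le {y : V → ℝ} {z : V}
    (hy : IsPeakedSubeigenvector G y z) :
    adjRadius G ^ 2 ≤
      ∑ u ∈ G.neighborFinset z, (#(G.neighborFinset z ∩ G.neighborFinset u) : ℝ) +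
        #(G.interedges (G.neighborFinset z) (G.neighborFinset z)ᶜ) := by
  have hdeg (u : V) : ∑ w ∈ G.neighborFinset u, y w ≤ G.degree u := by
    simpa using sum_le_card_nsmul (G.neighborFinset u) y 1 fun w _ ↦ hy.le_one w
  calc adjRadius G ^ 2 = adjRadius G * (adjRadius G * y z) := by rw [hy.apply_peak]; ring
    _ ≤ adjRadius G * ∑ u ∈ G.neighborFinset z, y u := by
        gcongr
        exacts [adjRadius_nonneg G, hy.adjRadius_mul_le z]
    _ ≤ ∑ u ∈ G.neighborFinset z, ∑ w ∈ G.neighborFinset u, y w := by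
        rw [mul_sum]
        exact sum_le_sum fun u _ ↦ hy.adjRadius_mul_le u
    _ ≤ ∑ u ∈ G.neighborFinset z, (G.degree u : ℝ) := sum_le_sum fun u _ ↦ hdeg u
    _ = _ := by
        simp only [← card_inter_add_card_compl_inter G (G.neighborFinset z), Nat.cast_add,
          sum_add_distrib, card_interedges_eq_sum_s7, Nat.cast_sum]

/-! ### Maximum cuts -/

/-- `S` is one side of a maximum cut of `G`, the other side being `Sᶜ`. -/
def IsMaximumCut (G : SimpleGraph V) [DecidableRel G.Adj] (S : Finset V) : Prop :=
  ∀ S' : Finset V, #(G.interedges S' S'ᶜ) ≤ #(G.interedges S Sᶜ)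

variable {S : Finset V}

theorem IsMaximumCut.compl (hS : IsMaximumCut G S) : IsMaximumCut G Sᶜ := fun S' ↦ by
  rw [compl_compl, card_interedges_symm G Sᶜ]
  exact hS S'

theorem IsMaximumCut.card_inter_le (hS : IsMaximumCut G S) {v : V} (hv : v ∈ S) :
    #(S ∩ G.neighborFinset v) ≤ #(Sᶜ ∩ G.neighborFinset v) := by
  have hmoved : #(G.interedges (S.erase v) (S.erase v)ᶜ) =
      #(S ∩ G.neighborFinset v) + #(G.interedges (S.erase v) Sᶜ) := by
    rw [card_interedges_symm, compl_erase, card_interedges_eq_sum_s7, sum_insert (by simpa using hv),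
      ← card_interedges_eq_sum_s7, card_interedges_symm G Sᶜ, erase_inter,
      erase_eq_of_notMem (by simp)]
  have hcut : #(G.interedges S Sᶜ) =
      #(Sᶜ ∩ G.neighborFinset v) + #(G.interedges (S.erase v) Sᶜ) := by
    rw [card_interedges_eq_sum_s7, card_interedges_eq_sum_s7,
      add_sum_erase S (fun u ↦ #(Sᶜ ∩ G.neighborFinset u)) hv]
  have := hS (S.erase v)
  lia

variable {t : ℝ}

theorem abs_card_sub_half_le_of_le_card_interedges (ht : 0 ≤ t)
    (hcut : (Fintype.card V : ℝ) ^ 2 / 4 - t ^ 2 ≤ #(G.interedges S Sᶜ)) :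
    |(#S : ℝ) - Fintype.card V / 2| ≤ t := by
  have hle : (#(G.interedges S Sᶜ) : ℝ) ≤ #S * #Sᶜ := mod_cast G.card_interedges_le_mul S Sᶜ
  have hcompl : (#S + #Sᶜ : ℝ) = Fintype.card V := mod_cast card_add_card_compl S
  refine abs_le_of_sq_le_sq ?_ ht
  rw [← hcompl] at hcut ⊢
  linarith

theorem card_filter_lt_card_sdiff_le (ht : 0 < t)
    (hcut : (Fintype.card V : ℝ) ^ 2 / 4 - t ^ 2 ≤ #(G.interedges S Sᶜ)) :
    #{v ∈ S | t < #(Sᶜ \ G.neighborFinset v)} ≤ t := by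
  set bad := {v ∈ S | t < #(Sᶜ \ G.neighborFinset v)}
  have hmiss : #bad * t ≤ ∑ v ∈ S, (#(Sᶜ \ G.neighborFinset v) : ℝ) := by
    calc #bad * t ≤ ∑ v ∈ bad, (#(Sᶜ \ G.neighborFinset v) : ℝ) := by
          rw [← nsmul_eq_mul]
          exact card_nsmul_le_sum _ _ _ fun v hv ↦ (mem_filter.1 hv).2.le
      _ ≤ _ := sum_le_sum_of_subset_of_nonneg (filter_subset _ _) fun _ _ _ ↦ Nat.cast_nonneg _
  have hpairs : ∑ v ∈ S, (#(Sᶜ \ G.neighborFinset v) : ℝ) + #(G.interedges S Sᶜ) = #S * #Sᶜ := by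
    rw [card_interedges_eq_sum_s7]
    norm_cast
    simp only [← sum_add_distrib, card_sdiff_add_card_inter, sum_const, smul_eq_mul]
  have hcompl : (#S + #Sᶜ : ℝ) = Fintype.card V := mod_cast card_add_card_compl S
  rw [← hcompl] at hcut
  refine le_of_mul_le_mul_right ?_ ht
  nlinarith [sq_nonneg ((#S : ℝ) - #Sᶜ)]

theorem IsMaximumCut.card_inter_lt_of_free {k : ℕ} (hG : (wheelGraph (2 * k + 1)).Free G)
    (hS : IsMaximumCut G S) (ht : 0 < t)
    (hcut : (Fintype.card V : ℝ) ^ 2 / 4 - t ^ 2 ≤ #(G.interedges S Sᶜ)) {u : V} (hu : u ∈ S) :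
    #(S ∩ G.neighborFinset u) < (k + 1) * t + k := by
  by_contra! hlarge
  set bad := {v ∈ S | t < #(Sᶜ \ G.neighborFinset v)}
  have hgood : (k : ℝ) ≤ #((S ∩ G.neighborFinset u) \ bad) := by
    have hle : (#(S ∩ G.neighborFinset u) : ℝ) ≤ #((S ∩ G.neighborFinset u) \ bad) + #bad :=
      mod_cast (S ∩ G.neighborFinset u).card_le_card_sdiff_add_card
    have hkt : 0 ≤ k * t := by positivity
    linarith [card_filter_lt_card_sdiff_le ht hcut]
  obtain ⟨P, hP, hPk⟩ := exists_subset_card_eq (Nat.cast_le.1 hgood)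
  obtain ⟨Q, hQsub, hQ, hPQ⟩ : ∃ Q ⊆ Sᶜ ∩ G.neighborFinset u,
      #(Sᶜ ∩ G.neighborFinset u) - #P * t ≤ (#Q : ℝ) ∧ ∀ p ∈ P, ∀ q ∈ Q, G.Adj p q := by
    refine exists_subset_card_sub_mul_le_adj fun p hp ↦ ?_
    obtain ⟨hpS, hpbad⟩ := mem_sdiff.1 (hP hp)
    have : ¬ t < #(Sᶜ \ G.neighborFinset p) := fun h ↦
      hpbad (mem_filter.2 ⟨(mem_inter.1 hpS).1, h⟩)
    exact (Nat.cast_le.2 (card_le_card (sdiff_subset_sdiff inter_subset_left subset_rfl))).trans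
      (not_lt.1 this)
  have hB : (#(S ∩ G.neighborFinset u) : ℝ) ≤ #(Sᶜ ∩ G.neighborFinset u) :=
    Nat.cast_le.2 (hS.card_inter_le hu)
  rw [hPk] at hQ
  refine hG (wheelGraph_isContained_of_hub hPk.ge (Nat.cast_le.1 (by linarith : (k : ℝ) ≤ #Q))
    (fun p hp ↦ (G.mem_neighborFinset u p).1 (mem_inter.1 (mem_sdiff.1 (hP hp)).1).2)
    (fun q hq ↦ (G.mem_neighborFinset u q).1 (mem_inter.1 (hQsub hq)).2) hPQ)

/-! ### Spectral extremal graphs -/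

/-- `G` is `F`-free and attains the maximum spectral radius among the `F`-free graphs on its
vertex set. -/
def IsSpectralExtremal {α : Type*} (F : SimpleGraph α) (G : SimpleGraph V) : Prop :=
  F.Free G ∧ ∀ H : SimpleGraph V, F.Free H → adjRadius H ≤ adjRadius G

theorem sq_le_four_mul_card_edgeFinset_turanGraph_two (n : ℕ) :
    n ^ 2 ≤ 4 * #(turanGraph n 2).edgeFinset + 1 := by
  rw [card_edgeFinset_turanGraph]
  obtain ⟨m, rfl | rfl⟩ := n.even_or_odd' <;> simp <;> ring_nf <;> omega

omit [DecidableEq V] [DecidableRel G.Adj] in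
theorem IsSpectralExtremal.half_card_sub_one_le_adjRadius {α : Type*} {F : SimpleGraph α}
    (hG : IsSpectralExtremal F G) (hF : ¬ F.CliqueFree 3) :
    ((Fintype.card V : ℝ) - 1) / 2 ≤ adjRadius G := by
  classical
  set n := Fintype.card V
  rcases Nat.eq_zero_or_pos n with h0 | hpos
  · rw [h0]
    exact (by norm_num : (((0 : ℕ) : ℝ) - 1) / 2 ≤ 0).trans (adjRadius_nonneg G)
  set e := Fintype.equivFin V
  set H := (turanGraph n 2).comap e
  have hfree : F.Free H := fun hFH ↦
    hF ((turanGraph_cliqueFree two_pos).comap (hFH.trans (Iso.comap e _).isContained))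
  have hedges : (n : ℝ) ^ 2 ≤ 4 * #H.edgeFinset + 1 := by
    rw [(Iso.comap e (turanGraph n 2)).card_edgeFinset_eq]
    exact_mod_cast sq_le_four_mul_card_edgeFinset_turanGraph_two n
  have hH := two_mul_card_edgeFinset_le_adjRadius_mul_card H
  have hle := hG.2 H hfree
  have hn1 : (1 : ℝ) ≤ n := Nat.one_le_cast.2 hpos
  refine le_of_mul_le_mul_right (a := (n : ℝ)) ?_ (by positivity)
  nlinarith

section Rewiring

omit [Fintype V] [DecidableRel G.Adj]

/-- The graph obtained from `G` by replacing the neighbourhood of `v` by `X` (minus `v` itself). -/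
def rewire (G : SimpleGraph V) (v : V) (X : Finset V) : SimpleGraph V :=
  G.deleteIncidenceSet v ⊔ fromRel fun a b ↦ a = v ∧ b ∈ X

omit [DecidableEq V] in
theorem rewire_adj_of_ne {v a b : V} {X : Finset V} (ha : a ≠ v) (hb : b ≠ v) :
    (rewire G v X).Adj a b ↔ G.Adj a b := by
  simp [rewire, deleteIncidenceSet_adj, ha, hb]

theorem rewire_adj_self {v b : V} {X : Finset V} :
    (rewire G v X).Adj v b ↔ b ∈ X.erase v := by
  simp only [rewire, sup_adj, deleteIncidenceSet_adj, fromRel_adj, mem_erase]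
  tauto

end Rewiring

theorem IsSpectralExtremal.sum_erase_le_sum_neighborFinset {α : Type*} [Fintype α]
    {F : SimpleGraph α} (hG : IsSpectralExtremal F G) {y : V → ℝ} (hy : ∀ u, 0 ≤ y u)
    (hsub : ∀ u, adjRadius G * y u ≤ ∑ w ∈ G.neighborFinset u, y w) {v : V} {X : Finset V}
    (hrep : ∀ I : Finset V, #I = Fintype.card α → ∃ s ∉ I, ∀ w ∈ I ∩ X, G.Adj w s) :
    ∑ w ∈ X.erase v, y w ≤ ∑ w ∈ G.neighborFinset v, y w := by
  classical
  by_contra! hlt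
  have hnbr : (rewire G v X).neighborFinset v = X.erase v := by
    ext b
    rw [mem_neighborFinset, rewire_adj_self]
  have hfree : F.Free (rewire G v X) := by
    refine free_of_replaceable (v := v) (fun u hu w hw ↦ (rewire_adj_of_ne hu hw).1)
      (fun I hI ↦ ?_) hG.1
    obtain ⟨s, hs, hadj⟩ := hrep I hI
    exact ⟨s, hs, fun w hw hwv ↦
      hadj w (mem_inter.2 ⟨hw, mem_of_mem_erase (rewire_adj_self.1 hwv.symm)⟩)⟩
  exact (hG.2 _ hfree).not_gt (adjRadius_lt_of_sum_neighborFinset_lt hy hsub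
    (fun u hu w hw ↦ (rewire_adj_of_ne hu hw).symm) (by rwa [hnbr]))

theorem IsSpectralExtremal.adjRadius_le_degree_add {α : Type*} [Fintype α] {F : SimpleGraph α}
    (hG : IsSpectralExtremal F G) {y : V → ℝ} {z : V} (hy : IsPeakedSubeigenvector G y z)
    {v : V} {X : Finset V}
    (hrep : ∀ I : Finset V, #I = Fintype.card α → ∃ s ∉ I, ∀ w ∈ I ∩ X, G.Adj w s) :
    adjRadius G ≤ G.degree v + #(G.neighborFinset z \ X.erase v) := by
  have hsum (A : Finset V) : ∑ w ∈ A, y w ≤ #A := by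
    simpa using sum_le_card_nsmul A y 1 fun w _ ↦ hy.le_one w
  calc adjRadius G = adjRadius G * y z := by rw [hy.apply_peak, mul_one]
    _ ≤ ∑ w ∈ G.neighborFinset z, y w := hy.adjRadius_mul_le z
    _ ≤ ∑ w ∈ X.erase v, y w + ∑ w ∈ G.neighborFinset z \ X.erase v, y w := by
        rw [add_comm, ← sum_union sdiff_disjoint, sdiff_union_self_eq_union]
        exact sum_le_sum_of_subset_of_nonneg subset_union_left fun w _ _ ↦ hy.nonneg w
    _ ≤ G.degree v + #(G.neighborFinset z \ X.erase v) :=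
        add_le_add ((hG.sum_erase_le_sum_neighborFinset hy.nonneg hy.adjRadius_mul_le hrep).trans
          (hsum _)) (hsum _)

theorem exists_common_neighbor_notMem {P A I : Finset V} {m : ℝ}
    (h : ∀ p ∈ P, #(A \ G.neighborFinset p) ≤ m) (hI : #I + #P * m < #A) :
    ∃ a ∈ A, a ∉ I ∧ ∀ p ∈ P, G.Adj p a := by
  obtain ⟨Q, hQA, hQ, hPQ⟩ := exists_subset_card_sub_mul_le_adj h
  have hcard : (#I : ℝ) < #Q := by linarith
  obtain ⟨a, ha, haI⟩ := exists_mem_notMem_of_card_lt_card (Nat.cast_lt.1 hcard)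
  exact ⟨a, hQA ha, haI, fun p hp ↦ hPQ p hp a ha⟩

theorem le_card_interedges_compl {c : ℝ} (h : c ≤ #(G.interedges S Sᶜ)) :
    c ≤ #(G.interedges Sᶜ Sᶜᶜ) := by
  rwa [compl_compl, card_interedges_symm]

theorem IsSpectralExtremal.half_card_le_degree_add_of_peak_mem {k : ℕ} (hk : 0 < k)
    (hG : IsSpectralExtremal (wheelGraph (2 * k + 1)) G) (hS : IsMaximumCut G S) (ht : 0 < t)
    (hcut : (Fintype.card V : ℝ) ^ 2 / 4 - t ^ 2 ≤ #(G.interedges S Sᶜ))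
    (hn : (2 * k + 1) * (t + 1) + t < (Fintype.card V : ℝ) / 2) {y : V → ℝ} {z : V}
    (hy : IsPeakedSubeigenvector G y z) (hz : z ∈ S) (v : V) :
    (Fintype.card V : ℝ) / 2 ≤ G.degree v + (k + 2) * (t + 1) := by
  set bad := {x ∈ Sᶜ | t < #(Sᶜᶜ \ G.neighborFinset x)}
  set X := Sᶜ \ bad
  have hgood {x : V} (hx : x ∈ X) : (#(S \ G.neighborFinset x) : ℝ) ≤ t := by
    simp only [X, bad, mem_sdiff, mem_filter, not_and, compl_compl] at hx
    exact not_lt.1 (hx.2 hx.1)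
  have hrep (I : Finset V) (hI : #I = Fintype.card (Fin (2 * k + 1))) :
      ∃ s ∉ I, ∀ w ∈ I ∩ X, G.Adj w s := by
    have hIX : (#(I ∩ X) : ℝ) ≤ #I := Nat.cast_le.2 (card_le_card inter_subset_left)
    have hcast : (#I : ℝ) = 2 * k + 1 := by simp [hI]
    have hSn := abs_le.1 (abs_card_sub_half_le_of_le_card_interedges ht.le hcut)
    obtain ⟨s, -, hsI, hs⟩ := exists_common_neighbor_notMem (A := S) (I := I)
      (fun p hp ↦ hgood (mem_inter.1 hp).2) (by nlinarith)
    exact ⟨s, hsI, hs⟩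
  have hlost : (#(G.neighborFinset z \ X.erase v) : ℝ) ≤ (k + 1) * t + k + t + 1 := by
    have hsub : G.neighborFinset z \ X.erase v ⊆ insert v ((S ∩ G.neighborFinset z) ∪ bad) := by
      intro w
      simp only [X, mem_sdiff, mem_erase, mem_insert, mem_union, mem_inter, mem_compl]
      tauto
    have hcard : (#(G.neighborFinset z \ X.erase v) : ℝ) ≤ #(S ∩ G.neighborFinset z) + #bad + 1 :=
      mod_cast (card_le_card hsub).trans ((card_insert_le ..).trans
        (Nat.add_le_add_right (card_union_le ..) 1))
    linarith [hS.card_inter_lt_of_free hG.1 ht hcut hz,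
      card_filter_lt_card_sdiff_le ht (le_card_interedges_compl hcut)]
  have hlow := hG.half_card_sub_one_le_adjRadius (not_cliqueFree_three_wheelGraph hk)
  linarith [hG.adjRadius_le_degree_add hy hrep (v := v)]

theorem IsSpectralExtremal.half_card_le_degree_add {k : ℕ} (hk : 0 < k)
    (hG : IsSpectralExtremal (wheelGraph (2 * k + 1)) G) (hS : IsMaximumCut G S) (ht : 0 < t)
    (hcut : (Fintype.card V : ℝ) ^ 2 / 4 - t ^ 2 ≤ #(G.interedges S Sᶜ))
    (hn : (2 * k + 1) * (t + 1) + t < (Fintype.card V : ℝ) / 2) (v : V) :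
    (Fintype.card V : ℝ) / 2 ≤ G.degree v + (k + 2) * (t + 1) := by
  have : Nonempty V := ⟨v⟩
  obtain ⟨y, z, hy⟩ := exists_isPeakedSubeigenvector G
  by_cases hz : z ∈ S
  · exact hG.half_card_le_degree_add_of_peak_mem hk hS ht hcut hn hy hz v
  · exact hG.half_card_le_degree_add_of_peak_mem hk hS.compl ht (le_card_interedges_compl hcut) hn
      hy (mem_compl.2 hz) v

theorem IsMaximumCut.card_inter_lt_of_le_degree {k : ℕ} {m : ℝ}
    (hG : (wheelGraph (2 * k + 1)).Free G) (hS : IsMaximumCut G S) (ht : 0 < t)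
    (hcut : (Fintype.card V : ℝ) ^ 2 / 4 - t ^ 2 ≤ #(G.interedges S Sᶜ))
    (hdeg : ∀ v, (Fintype.card V : ℝ) / 2 ≤ G.degree v + m)
    (hn : (k + 1) * (m + (k + 2) * t + k) + t + k ≤ (Fintype.card V : ℝ) / 2)
    {u : V} (hu : u ∈ S) : #(S ∩ G.neighborFinset u) < k := by
  by_contra! hlarge
  obtain ⟨P, hPsub, hPk⟩ := exists_subset_card_eq hlarge
  have habs := abs_le.1 (abs_card_sub_half_le_of_le_card_interedges ht.le hcut)
  have hcompl : (#S + #Sᶜ : ℝ) = Fintype.card V := mod_cast card_add_card_compl S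
  have hmiss {p : V} (hp : p ∈ S) : (#(Sᶜ \ G.neighborFinset p) : ℝ) ≤ m + (k + 2) * t + k := by
    have hsdiff : (#(Sᶜ \ G.neighborFinset p) + #(Sᶜ ∩ G.neighborFinset p) : ℝ) = #Sᶜ :=
      mod_cast card_sdiff_add_card_inter ..
    have hsplit : (#(S ∩ G.neighborFinset p) + #(Sᶜ ∩ G.neighborFinset p) : ℝ) = G.degree p :=
      mod_cast card_inter_add_card_compl_inter G S p
    linarith [hdeg p, hS.card_inter_lt_of_free hG ht hcut hp]
  have huP : u ∉ P := fun h ↦ by simpa using (mem_inter.1 (hPsub h)).2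
  obtain ⟨Q, -, hQ, hPQ⟩ := exists_subset_card_sub_mul_le_adj (G := G) (P := insert u P) (B := Sᶜ)
    fun p hp ↦ hmiss ((mem_insert.1 hp).elim (· ▸ hu) fun h ↦ (mem_inter.1 (hPsub h)).1)
  rw [card_insert_of_notMem huP, hPk] at hQ
  push_cast at hQ
  exact hG (wheelGraph_isContained_of_hub hPk.ge (Nat.cast_le.1 (by linarith : (k : ℝ) ≤ #Q))
    (fun p hp ↦ (G.mem_neighborFinset u p).1 (mem_inter.1 (hPsub hp)).2)
    (hPQ u (mem_insert_self u P)) fun p hp ↦ hPQ p (mem_insert_of_mem hp))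

theorem exists_le_card_inter_of_star_isContained {k : ℕ}
    (h : completeBipartiteGraph (Fin 1) (Fin k) ⊑ G.induce (S : Set V)) :
    ∃ u ∈ S, k ≤ #(S ∩ G.neighborFinset u) := by
  obtain ⟨f⟩ := h
  refine ⟨f (.inl 0), (f (.inl 0)).2, ?_⟩
  have hinj : Function.Injective fun i ↦ (f (.inr i)).val := fun i j hij ↦
    Sum.inr_injective (f.injective (Subtype.ext hij))
  calc k = #(univ.image fun i ↦ (f (.inr i)).val) := by
        rw [card_image_of_injective _ hinj, card_fin]
    _ ≤ _ := card_le_card fun w hw ↦ by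
        obtain ⟨i, -, rfl⟩ := mem_image.1 hw
        have : (G.induce (S : Set V)).Adj (f (.inl 0)) (f (.inr i)) := f.toHom.map_adj (by simp)
        exact mem_inter.2 ⟨(f (.inr i)).2, by simpa using this⟩

theorem exists_forall_sq_sub_sq_le_card_interedges {k : ℕ} (hk : 0 < k) {δ : ℝ} (hδ : 0 < δ) :
    ∃ N : ℕ, ∀ (V : Type u) [Fintype V] [DecidableEq V] (G : SimpleGraph V) [DecidableRel G.Adj],
      N ≤ Fintype.card V → IsSpectralExtremal (wheelGraph (2 * k + 1)) G →
      ∀ S, IsMaximumCut G S →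
      (Fintype.card V : ℝ) ^ 2 / 4 - (δ * Fintype.card V) ^ 2 ≤ #(G.interedges S Sᶜ) := by
  obtain ⟨N, hN⟩ := exists_forall_sum_card_inter_neighborFinset_le.{u} k
    (by positivity : 0 < δ ^ 2 / 2)
  obtain ⟨M, hM⟩ := exists_nat_ge (1 / δ ^ 2)
  refine ⟨max (max N M) 1, fun V _ _ G _ hV hG S hS ↦ ?_⟩
  simp only [max_le_iff] at hV
  have : Nonempty V := Fintype.card_pos_iff.1 hV.2
  obtain ⟨y, z, hy⟩ := exists_isPeakedSubeigenvector G
  have hcut : (#(G.interedges (G.neighborFinset z) (G.neighborFinset z)ᶜ) : ℝ) ≤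
      #(G.interedges S Sᶜ) := Nat.cast_le.2 (hS _)
  have hsq := hy.sq_adjRadius_le.trans (add_le_add (hN V G hV.1.1 hG.1 z) hcut)
  have hlow := hG.half_card_sub_one_le_adjRadius (not_cliqueFree_three_wheelGraph hk)
  have hn1 : (1 : ℝ) ≤ Fintype.card V := Nat.one_le_cast.2 hV.2
  have hδn : 1 ≤ Fintype.card V * δ ^ 2 :=
    (div_le_iff₀ (by positivity)).1 (hM.trans (Nat.cast_le.2 hV.1.2))
  have hlowsq := pow_le_pow_left₀ (by linarith) hlow 2
  have hquad := mul_le_mul_of_nonneg_left hδn (by linarith : (0 : ℝ) ≤ Fintype.card V)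
  nlinarith

theorem parts_star_free_general {k : ℕ} (hk : 0 < k) {ε : ℝ} (hε : 0 < ε) :
    ∃ N : ℕ, ∀ (V : Type u) [Fintype V] [DecidableEq V] (G : SimpleGraph V) [DecidableRel G.Adj],
      N ≤ Fintype.card V → IsSpectralExtremal (wheelGraph (2 * k + 1)) G →
      ∀ S, IsMaximumCut G S →
        (∀ v, (1 / 2 - ε) * Fintype.card V < G.degree v) ∧
        (completeBipartiteGraph (Fin 1) (Fin k)).Free (G.induce (S : Set V)) ∧
        ∀ u ∈ S, #(S ∩ G.neighborFinset u) < k := by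
  -- The smallness conditions on `t = δ n` all follow from `4 (k + 2) ^ 2 (t + 1) ≤ η n`.
  set η := min ε (1 / 2)
  have hη : 0 < η := lt_min hε (by norm_num)
  set δ := η / (8 * (k + 2) ^ 2) with hδ
  have hδ0 : 0 < δ := by positivity
  obtain ⟨N, hN⟩ := exists_forall_sq_sub_sq_le_card_interedges.{u} hk hδ0
  obtain ⟨M, hM⟩ := exists_nat_gt (1 / δ)
  refine ⟨max N M, fun V _ _ G _ hV hG S hS ↦ ?_⟩
  obtain ⟨hNV, hMV⟩ := max_le_iff.1 hV
  set n := (Fintype.card V : ℝ)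
  set t := δ * n
  have ht : 1 < t := (div_lt_iff₀' hδ0).1 (hM.trans_le (Nat.cast_le.2 hMV))
  have htn : 8 * (k + 2) ^ 2 * t = η * n := by simp only [t, hδ]; field_simp
  have hηε : η * n ≤ ε * n := by gcongr; exact min_le_left ..
  have hη2 : η * n ≤ n / 2 := by
    rw [div_eq_inv_mul, ← one_div]
    gcongr
    exact min_le_right ..
  have hk0 : (0 : ℝ) ≤ k := k.cast_nonneg
  have hcut := hN V G hNV hG S hS
  have hloss : (k + 2) * (t + 1) < η * n := by
    rw [← htn]
    nlinarith [mul_nonneg hk0 hk0]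
  have hdeg (v : V) : n / 2 ≤ G.degree v + (k + 2) * (t + 1) :=
    hG.half_card_le_degree_add hk hS (by linarith) hcut (by nlinarith) v
  have hin (u : V) (hu : u ∈ S) : #(S ∩ G.neighborFinset u) < k :=
    hS.card_inter_lt_of_le_degree hG.1 (by linarith) hcut hdeg (by nlinarith) hu
  refine ⟨fun v ↦ ?_, fun hstar ↦ ?_, hin⟩
  · linarith [hdeg v]
  · obtain ⟨u, hu, hku⟩ := exists_le_card_inter_of_star_isContained hstar
    exact (hin u hu).not_ge hku

section Translation

variable {n : ℕ} (G : SimpleGraph (Fin n)) [DecidableRel G.Adj]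

theorem deg_eq_degree (v : Fin n) : deg G v = G.degree v := by
  unfold deg
  congr!

theorem degIn_eq_card_inter (A : Finset (Fin n)) (v : Fin n) :
    degIn G A v = #(A ∩ G.neighborFinset v) := by
  simp only [degIn, ← filter_mem_eq_inter, mem_neighborFinset]
  congr!

theorem cutCount_eq_card_interedges (S : Finset (Fin n)) :
    cutCount G S = #(G.interedges S Sᶜ) := by
  unfold cutCount
  congr 1
  ext ⟨a, b⟩
  simp [mem_interedges_iff, and_assoc, and_comm]

variable {G}

theorem isMaxCut_iff {S T : Finset (Fin n)} : IsMaxCut G S T ↔ T = Sᶜ ∧ IsMaximumCut G S := by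
  simp only [IsMaxCut, IsMaximumCut, cutCount_eq_card_interedges]

omit [DecidableRel G.Adj] in
theorem isSpexWheel_iff {t : ℕ} : IsSpexWheel t G ↔ IsSpectralExtremal (wheelGraph t) G := by
  simp only [IsSpexWheel, IsSpectralExtremal, wheelFree_iff_free, lam1_eq_adjRadius]

end Translation

end Development

/-- Every vertex has degree greater than `(1/2 - 1/p)n`, and the two
sides of a maximum cut induce `K_{1,k}`-free graphs; in particular all internal degrees
are at most `k - 1`. -/
theorem parts_star_free (k : ℕ) (hk : 2 ≤ k) :
    ∃ p₀ : ℕ, ∀ p : ℕ, p₀ ≤ p → ∃ N : ℕ, ∀ n : ℕ, N ≤ n →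
      ∀ G : SimpleGraph (Fin n), IsSpexWheel (2 * k + 1) G →
      ∀ S T : Finset (Fin n), IsMaxCut G S T →
        (∀ v : Fin n, (1 / 2 - 1 / (p : ℝ)) * (n : ℝ) < (deg G v : ℝ)) ∧
        ¬ ContainsCopy (completeBipartiteGraph (Fin 1) (Fin k))
            (G.induce (S : Set (Fin n))) ∧
        ¬ ContainsCopy (completeBipartiteGraph (Fin 1) (Fin k))
            (G.induce (T : Set (Fin n))) ∧
        (∀ u ∈ S, degIn G S u ≤ k - 1) ∧ (∀ u ∈ T, degIn G T u ≤ k - 1) := by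
  classical
  refine ⟨1, fun p hp ↦ ?_⟩
  obtain ⟨N, hN⟩ := parts_star_free_general (two_pos.trans_le hk)
    (one_div_pos.2 (Nat.cast_pos.2 hp) : 0 < 1 / (p : ℝ))
  refine ⟨N, fun n hn G hG S T hST ↦ ?_⟩
  obtain ⟨rfl, hS⟩ := isMaxCut_iff.1 hST
  have hG' := isSpexWheel_iff.1 hG
  have hcard : N ≤ Fintype.card (Fin n) := by rwa [Fintype.card_fin]
  obtain ⟨hdeg, hstarS, hinS⟩ := hN _ G hcard hG' S hS
  obtain ⟨-, hstarT, hinT⟩ := hN _ G hcard hG' Sᶜ hS.compl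
  simp only [Fintype.card_fin] at hdeg
  simp only [deg_eq_degree, degIn_eq_card_inter, containsCopy_iff_isContained]
  exact ⟨hdeg, hstarS, hstarT, fun u hu ↦ Nat.le_sub_one_of_lt (hinS u hu),
    fun u hu ↦ Nat.le_sub_one_of_lt (hinT u hu)⟩
end
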